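/- arXiv:1806.04783 — 8 statements merged into one kernel-verified Lean document; each statement's English description precedes it below -/
import Mathlib

section
/- There is an absolute constant C > 0 such that for every prime p ≥ 3, every basis {ω₁, ω₂, ω₃} of F_{p³} over F_p, and all integers 1 ≤ H₁ ≤ H₂ ≤ H₃ < √(p/2), one has S₁ := Σ_{z ∈ Z \ F_p} f₀(z)² ≤ C·(H₁H₂H₃)²·log p, where F_p denotes the prime subfield of F_{p³}. -/
open scoped Classical

/-!
For each `z` the pairs of coordinate vectors of elements `x, y` with `x z = y` form a lattice, and
`f₀ z` is at most the number of its points in the box. If at most `O((H₁ H₂ H₃)² / t²)` of the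
ratios `z` outside `F_p` have at least `t` such points, then summing over `t ≤ p³` gives the
theorem. To bound these level sets, let `d` be the dimension spanned by the lattice points in the
box.

* If `d ≤ 3`, the pigeonhole principle modulo `k`, with `k³` just below `t`, gives a nonzero
  lattice point in the box shrunk by a factor of about `k`, and such a point determines `z`. This
  estimate is lossy once the shrunk box becomes thin in one direction. But as `F` has odd degree, no
  plane is stable under multiplication by `z`, so the lattice points in a thin box are all
  proportional.
* If `d > 3`, the uncertainty principle bounds the number of points in the box by that of the
  lattice of the trace-dual basis in a dual box. The two lattices are orthogonal there, hence their
  dimensions add up to at most `6`, and the first case applies to the dual lattice.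
-/

section LinearAlgebra

open IntermediateField in
/-- A subspace stable under multiplication by `z` is a vector space over `K(z)`. -/
lemma natDegree_minpoly_dvd_finrank_of_mul_mem {K L : Type*} [Field K] [Field L] [Algebra K L]
    [FiniteDimensional K L] {z : L} {V : Submodule K L} (hV : ∀ x ∈ V, x * z ∈ V) :
    (minpoly K z).natDegree ∣ Module.finrank K V := by
  have hz : IsIntegral K z := IsIntegral.of_finite K z
  have hsmul : ∀ c ∈ Algebra.adjoin K {z}, ∀ x ∈ V, c * x ∈ V := by
    intro c hc
    induction hc using Algebra.adjoin_induction with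
    | mem c hc =>
      obtain rfl : c = z := hc
      exact fun x hx => mul_comm x c ▸ hV x hx
    | algebraMap a => exact fun x hx => Algebra.smul_def a x ▸ V.smul_mem a hx
    | add c d _ _ hc hd => exact fun x hx => add_mul c d x ▸ V.add_mem (hc x hx) (hd x hx)
    | mul c d _ _ hc hd => exact fun x hx => (mul_assoc c d x).symm ▸ hc _ (hd x hx)
  let W : Submodule K⟮z⟯ L :=
    { V.toAddSubmonoid with
      smul_mem' := fun c x hx => hsmul c
        (by rw [← adjoin_simple_toSubalgebra_of_isAlgebraic hz.isAlgebraic]; exact c.2) x hx }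
  rw [← adjoin.finrank hz]
  exact ⟨Module.finrank K⟮z⟯ W, (Module.finrank_mul_finrank K K⟮z⟯ W).symm⟩

lemma mem_range_algebraMap_of_mul_mem {K L : Type*} [Field K] [Field L] [Algebra K L]
    [FiniteDimensional K L] {z : L} {V : Submodule K L} (hV : ∀ x ∈ V, x * z ∈ V)
    (hcop : (Module.finrank K V).Coprime (Module.finrank K L)) : z ∈ (algebraMap K L).range :=
  minpoly.natDegree_eq_one_iff.1 <| Nat.eq_one_of_dvd_coprimes hcop
    (natDegree_minpoly_dvd_finrank_of_mul_mem hV) (minpoly.degree_dvd (IsIntegral.of_finite K z))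

/-- If the determinant were nonzero, the plane spanned by `u` and `v` would be stable under
multiplication by `z`. -/
lemma det_eq_zero_of_mul_mem_span_pair {K L : Type*} [Field K] [Field L] [Algebra K L]
    [FiniteDimensional K L] (hL : Odd (Module.finrank K L)) {z : L}
    (hz : z ∉ (algebraMap K L).range) {u v : L} (huv : LinearIndependent K ![u, v])
    {x y x' y' : K} (h : (x • u + y • v) * z ∈ Submodule.span K (Set.range ![u, v]))
    (h' : (x' • u + y' • v) * z ∈ Submodule.span K (Set.range ![u, v])) :
    x * y' - x' * y = 0 := by
  by_contra hD
  let V := Submodule.span K (Set.range ![u, v])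
  have hu : u * z ∈ V := by
    rw [← V.smul_mem_iff hD]
    convert V.sub_mem (V.smul_mem y' h) (V.smul_mem y h') using 1
    simp only [Algebra.smul_def, map_sub, map_mul]
    ring
  have hv : v * z ∈ V := by
    rw [← V.smul_mem_iff hD]
    convert V.sub_mem (V.smul_mem x h') (V.smul_mem x' h) using 1
    simp only [Algebra.smul_def, map_sub, map_mul]
    ring
  have hV : V ≤ V.comap (LinearMap.mulRight K z) :=
    Submodule.span_le.2 <| Set.range_subset_iff.2 <| Fin.forall_fin_two.2 ⟨hu, hv⟩
  refine hz (mem_range_algebraMap_of_mul_mem (V := V) hV ?_)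
  rw [finrank_span_eq_card huv, Fintype.card_fin]
  exact Nat.coprime_two_left.2 hL

lemma finrank_span_le_one_of_smul_eq_smul {R M : Type*} [CommRing R] [IsDomain R]
    [AddCommGroup M] [Module R M] [Module.IsTorsionFree R M] {S : Set M} (φ : M →ₗ[R] R) {u : M}
    (hu : φ u ≠ 0) (h : ∀ v ∈ S, φ u • v = φ v • u) :
    Module.finrank R (Submodule.span R S) ≤ 1 := by
  have hspan : Submodule.span R S ≤ LinearMap.eqLocus (φ u • LinearMap.id) (φ.smulRight u) :=
    Submodule.span_le.2 h
  have hinj : Function.Injective (φ.domRestrict (Submodule.span R S)) := by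
    rw [injective_iff_map_eq_zero]
    rintro ⟨v, hv⟩ (hφv : φ v = 0)
    have hv' : φ u • v = φ v • u := hspan hv
    rw [hφv, zero_smul] at hv'
    exact Subtype.ext ((smul_eq_zero_iff_right hu).1 hv')
  simpa using LinearMap.finrank_le_finrank_of_injective hinj

/-- The span of `S` meets the image under `J` of the span of `T` trivially: if `J w` is in the
former, then `B (J w) w = 0`. -/
lemma finrank_span_add_finrank_span_le {R M : Type*} [CommRing R] [IsDomain R]
    [IsPrincipalIdealRing R] [AddCommGroup M] [Module R M] [Module.Free R M] [Module.Finite R M]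
    (B : M →ₗ[R] M →ₗ[R] R) (J : M →ₗ[R] M) (hJ : ∀ w, B (J w) w = 0 → w = 0) {S T : Set M}
    (h : ∀ a ∈ S, ∀ w ∈ T, B a w = 0) :
    Module.finrank R (Submodule.span R S) + Module.finrank R (Submodule.span R T) ≤
      Module.finrank R M := by
  have hB : ∀ a ∈ Submodule.span R S, ∀ w ∈ Submodule.span R T, B a w = 0 := by
    intro a ha w hw
    induction ha, hw using Submodule.span_induction₂ with
    | mem_mem a w ha hw => exact h a ha w hw
    | zero_left => simp
    | zero_right => simp
    | add_left a b w _ _ _ ha hb => simp [ha, hb]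
    | add_right a w v _ _ _ hw hv => simp [hw, hv]
    | smul_left c a w _ _ hw => simp [hw]
    | smul_right c a w _ _ hw => simp [hw]
  let f := (Submodule.span R S).subtype.coprod (J ∘ₗ (Submodule.span R T).subtype)
  have hf : Function.Injective f := by
    rw [injective_iff_map_eq_zero]
    rintro ⟨⟨a, ha⟩, ⟨w, hw⟩⟩ (haw : a + J w = 0)
    obtain rfl : w = 0 := hJ w <| by
      rw [← neg_eq_of_add_eq_zero_right haw, map_neg, LinearMap.neg_apply, hB a ha w hw, neg_zero]
    obtain rfl : a = 0 := by simpa using haw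
    rfl
  simpa using LinearMap.finrank_le_finrank_of_injective hf

/-- Pigeonhole over the residue classes of the span of `S` modulo `k`. -/
lemma card_le_pow_finrank_span_mul {M : Type*} [AddCommGroup M] [Module.Free ℤ M] (S : Finset M)
    (k : ℕ) [NeZero k] (N : ℕ)
    (hN : ∀ a ∈ S, (S.filter fun b => ∃ c ∈ Submodule.span ℤ (S : Set M), b = a + k • c).card ≤ N) :
    S.card ≤ k ^ Module.finrank ℤ (Submodule.span ℤ (S : Set M)) * N := by
  let L := Submodule.span ℤ (S : Set M)
  have : Module.Finite ℤ L := Module.Finite.span_finset ℤ S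
  have : Fintype (ModN L k) := Fintype.ofFinite _
  let residue : S → ModN L k := fun a => ModN.mkQ k ⟨a, Submodule.subset_span a.2⟩
  have hfibre : ∀ y ∈ S.attach.image residue, (S.attach.filter (residue · = y)).card ≤ N := by
    intro y hy
    obtain ⟨a, -, rfl⟩ := Finset.mem_image.1 hy
    refine (Finset.card_le_card_of_injOn Subtype.val ?_ Subtype.val_injective.injOn).trans
      (hN a a.2)
    intro b hb
    obtain ⟨-, hb⟩ := Finset.mem_filter.1 hb
    obtain ⟨c, hc⟩ := (Submodule.Quotient.eq _).1 hb
    refine Finset.mem_filter.2 ⟨b.2, c, c.2, ?_⟩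
    have hc' : (b : M) = k • (c : M) + a :=
      sub_eq_iff_eq_add.1 (by simpa using congrArg Subtype.val hc.symm)
    exact hc'.trans (add_comm _ _)
  calc S.card = S.attach.card := S.card_attach.symm
    _ ≤ N * (S.attach.image residue).card := Finset.card_le_mul_card_image _ _ hfibre
    _ ≤ N * k ^ Module.finrank ℤ L := by
      gcongr
      rw [← ModN.natCard_eq, Nat.card_eq_fintype_card]
      exact Finset.card_le_univ _
    _ = k ^ Module.finrank ℤ L * N := mul_comm _ _

end LinearAlgebra

lemma exists_nat_pow_lt_le {t : ℝ} (ht : 1 < t) {n : ℕ} (hn : n ≠ 0) :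
    ∃ k : ℕ, k ≠ 0 ∧ (k : ℝ) ^ n < t ∧ t ≤ (2 * k) ^ n := by
  have hex : ∃ l : ℕ, t ≤ ((l + 1 : ℕ) : ℝ) ^ n := by
    obtain ⟨l, hl⟩ := exists_nat_ge t
    refine ⟨l, hl.trans ?_⟩
    calc (l : ℝ) ≤ (l + 1 : ℕ) := by simp
      _ ≤ _ := le_self_pow₀ (by simp) hn
  let k := Nat.find hex
  have hk : k ≠ 0 := fun h0 => by
    have := Nat.find_spec hex
    rw [show Nat.find hex = 0 from h0, zero_add, Nat.cast_one, one_pow] at this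
    linarith
  refine ⟨k, hk, ?_, ?_⟩
  · have := Nat.find_min hex (Nat.pred_lt hk)
    rwa [not_le, Nat.pred_eq_sub_one, Nat.sub_add_cancel (Nat.one_le_iff_ne_zero.2 hk)] at this
  · have hk1 : (1 : ℝ) ≤ k := mod_cast Nat.one_le_iff_ne_zero.2 hk
    calc t ≤ ((k + 1 : ℕ) : ℝ) ^ n := Nat.find_spec hex
      _ ≤ (2 * k) ^ n := by
        gcongr
        push_cast
        linarith

lemma two_mul_sq_lt_of_lt_sqrt {x y : ℝ} (hx : 0 ≤ x) (h : x < √(y / 2)) : 2 * x ^ 2 < y := by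
  linarith [(Real.lt_sqrt hx).1 h]

lemma lt_half_of_two_mul_sq_lt {x y : ℝ} (hy : 2 ≤ y) (h : 2 * x ^ 2 < y) : x < y / 2 := by
  nlinarith

lemma mul_eq_mul_of_dvd_sub {q : ℕ} {x y x' y' : ℤ} {r s : ℝ} (hx : |(x : ℝ)| ≤ r)
    (hx' : |(x' : ℝ)| ≤ r) (hy : |(y : ℝ)| ≤ s) (hy' : |(y' : ℝ)| ≤ s) (hr : 2 * r ^ 2 < q)
    (hs : 2 * s ^ 2 < q) (h : (q : ℤ) ∣ x * y - x' * y') : x * y = x' * y' := by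
  refine sub_eq_zero.1 (Int.eq_zero_of_abs_lt_dvd h ?_)
  have hr0 : 0 ≤ r := (abs_nonneg _).trans hx
  have hbound : |(x * y - x' * y' : ℝ)| < q :=
    calc |(x * y - x' * y' : ℝ)| ≤ |(x * y : ℝ)| + |(x' * y' : ℝ)| := abs_sub _ _
      _ = |(x : ℝ)| * |(y : ℝ)| + |(x' : ℝ)| * |(y' : ℝ)| := by rw [abs_mul, abs_mul]
      _ ≤ r * s + r * s := by gcongr
      _ < q := by nlinarith [sq_nonneg (r - s)]
  exact_mod_cast hbound

lemma sum_sq_le_of_card_mul_sq_le {α : Type*} {s : Finset α} {f : α → ℕ} {T : ℕ} {Q : ℝ}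
    (hT : ∀ a ∈ s, f a ≤ T)
    (hQ : ∀ t : ℕ, 1 ≤ t → ((s.filter (t ≤ f ·)).card : ℝ) * t ^ 2 ≤ Q) :
    ∑ a ∈ s, (f a : ℝ) ^ 2 ≤ 2 * Q * (1 + Real.log T) := by
  have hsq : ∀ n : ℕ, (n : ℝ) ^ 2 ≤ ∑ t ∈ Finset.Icc 1 n, 2 * (t : ℝ) := by
    intro n
    induction n with
    | zero => simp
    | succ n ih =>
      rw [Finset.sum_Icc_succ_top (by lia)]
      push_cast
      linarith [(Nat.cast_nonneg n : (0 : ℝ) ≤ n)]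
  have hlayer : ∀ a ∈ s,
      (f a : ℝ) ^ 2 ≤ ∑ t ∈ Finset.Icc 1 T, if t ≤ f a then 2 * (t : ℝ) else 0 := by
    intro a ha
    refine (hsq (f a)).trans_eq ?_
    rw [← Finset.sum_filter]
    congr 1
    ext t
    have := hT a ha
    simp only [Finset.mem_filter, Finset.mem_Icc]
    lia
  have hQ_nonneg : 0 ≤ Q := le_trans (by positivity) (hQ 1 le_rfl)
  calc ∑ a ∈ s, (f a : ℝ) ^ 2
      ≤ ∑ a ∈ s, ∑ t ∈ Finset.Icc 1 T, (if t ≤ f a then 2 * (t : ℝ) else 0) :=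
        Finset.sum_le_sum hlayer
    _ = ∑ t ∈ Finset.Icc 1 T, ∑ a ∈ s, (if t ≤ f a then 2 * (t : ℝ) else 0) := Finset.sum_comm
    _ ≤ ∑ t ∈ Finset.Icc 1 T, 2 * Q * (t : ℝ)⁻¹ := by
        refine Finset.sum_le_sum fun t ht => ?_
        have ht : 1 ≤ t := (Finset.mem_Icc.1 ht).1
        rw [← Finset.sum_filter, Finset.sum_const, nsmul_eq_mul, ← div_eq_mul_inv,
          le_div_iff₀ (mod_cast ht)]
        linarith [hQ t ht]
    _ = 2 * Q * (harmonic T : ℝ) := by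
        rw [← Finset.mul_sum, harmonic_eq_sum_Icc]
        push_cast
        rfl
    _ ≤ 2 * Q * (1 + Real.log T) := by
        gcongr
        exact harmonic_le_one_add_log T

section Fourier

variable {R : Type*} [CommRing R] [Fintype R] {ψ : AddChar R ℂ}

lemma sum_norm_sum_mul_sq (hψ : ψ.IsPrimitive) (X : Finset R) :
    ∑ s : R, ‖∑ x ∈ X, ψ (s * x)‖ ^ 2 = Fintype.card R * X.card := by
  have hexpand : ∀ s : R,
      ((‖∑ x ∈ X, ψ (s * x)‖ ^ 2 : ℝ) : ℂ) = ∑ x ∈ X, ∑ y ∈ X, ψ (s * (x - y)) := by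
    intro s
    rw [Complex.ofReal_pow, ← Complex.mul_conj', map_sum, Finset.sum_mul_sum]
    simp only [← AddChar.map_neg_eq_conj, ← AddChar.map_add_eq_mul, ← mul_neg, ← mul_add,
      ← sub_eq_add_neg]
  have horth : ∀ x ∈ X, ∑ s : R, ∑ y ∈ X, ψ (s * (x - y)) = Fintype.card R := by
    intro x hx
    rw [Finset.sum_comm]
    simp only [AddChar.sum_mulShift _ hψ, sub_eq_zero, Nat.cast_ite, Nat.cast_zero,
      Finset.sum_ite_eq, if_pos hx]
  rw [← Complex.ofReal_inj, Complex.ofReal_sum, Finset.sum_congr rfl fun s _ => hexpand s,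
    Finset.sum_comm, Finset.sum_congr rfl horth, Finset.sum_const, nsmul_eq_mul]
  push_cast
  ring

/-- An uncertainty principle: the character sum over `X` is large at every point of `S`. -/
lemma card_mul_card_le_of_le_re (hψ : ψ.IsPrimitive) {S X : Finset R} {c : ℝ} (hc : 0 ≤ c)
    (h : ∀ s ∈ S, ∀ x ∈ X, c ≤ (ψ (s * x)).re) :
    c ^ 2 * (S.card * X.card) ≤ Fintype.card R := by
  obtain hX | hX := X.card.eq_zero_or_pos
  · simp [hX]
  have hsum : ∀ s ∈ S, c * X.card ≤ ‖∑ x ∈ X, ψ (s * x)‖ := fun s hs =>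
    calc c * X.card ≤ ∑ x ∈ X, (ψ (s * x)).re := by
          simpa [mul_comm] using Finset.card_nsmul_le_sum X _ c (h s hs)
      _ = (∑ x ∈ X, ψ (s * x)).re := (Complex.re_sum _ _).symm
      _ ≤ ‖∑ x ∈ X, ψ (s * x)‖ := Complex.re_le_norm _
  refine le_of_mul_le_mul_right ?_ (Nat.cast_pos (α := ℝ).2 hX)
  calc c ^ 2 * (S.card * X.card) * X.card = ∑ s ∈ S, (c * X.card) ^ 2 := by
        rw [Finset.sum_const, nsmul_eq_mul]
        ring
    _ ≤ ∑ s ∈ S, ‖∑ x ∈ X, ψ (s * x)‖ ^ 2 := by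
        gcongr with s hs
        exact hsum s hs
    _ ≤ ∑ s : R, ‖∑ x ∈ X, ψ (s * x)‖ ^ 2 :=
        Finset.sum_le_sum_of_subset_of_nonneg (Finset.subset_univ _) fun _ _ _ => sq_nonneg _
    _ = Fintype.card R * X.card := sum_norm_sum_mul_sq hψ X

lemma half_le_re_stdAddChar {N : ℕ} [NeZero N] {n : ℤ} (h : |(n : ℝ)| ≤ N / 6) :
    1 / 2 ≤ (ZMod.stdAddChar (n : ZMod N)).re := by
  have hN : (0 : ℝ) < N := Nat.cast_pos.2 (NeZero.pos N)
  have harg : 2 * (Real.pi : ℂ) * Complex.I * n / N =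
      ((2 * Real.pi * n / N : ℝ) : ℂ) * Complex.I := by
    push_cast
    ring
  rw [ZMod.stdAddChar_coe, harg, Complex.exp_ofReal_mul_I_re, ← Real.cos_abs,
    ← Real.cos_pi_div_three]
  refine Real.cos_le_cos_of_nonneg_of_le_pi (abs_nonneg _) (by linarith [Real.pi_pos]) ?_
  rw [abs_div, abs_mul, abs_of_pos Real.two_pi_pos, Nat.abs_cast, div_le_iff₀ hN]
  nlinarith [Real.pi_pos]

/-- The additive character `x ↦ exp (2πi Tr(x) / p)` of a finite-dimensional `ZMod p`-algebra. -/
noncomputable def traceAddChar (p : ℕ) [NeZero p] (A : Type*) [CommRing A] [Algebra (ZMod p) A] :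
    AddChar A ℂ :=
  ZMod.stdAddChar.compAddMonoidHom (Algebra.trace (ZMod p) A).toAddMonoidHom

lemma traceAddChar_apply {p : ℕ} [NeZero p] {A : Type*} [CommRing A] [Algebra (ZMod p) A] (x : A) :
    traceAddChar p A x = ZMod.stdAddChar (Algebra.trace (ZMod p) A x) :=
  rfl

lemma traceAddChar_isPrimitive (p : ℕ) [Fact p.Prime] (F : Type*) [Field F] [Finite F]
    [Algebra (ZMod p) F] : (traceAddChar p F).IsPrimitive := by
  refine .of_ne_one fun h => ?_
  obtain ⟨x, hx⟩ := Algebra.trace_surjective (ZMod p) F 1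
  have h1 : ZMod.stdAddChar (1 : ZMod p) = 1 := by
    rw [← hx, ← traceAddChar_apply, h, AddChar.one_apply]
  exact one_ne_zero (ZMod.injective_stdAddChar (h1.trans (AddChar.map_zero_eq_one _).symm))

end Fourier

section IntBox

variable {ι : Type*} [Fintype ι] {r s : ι → ℝ} {x y : ι → ℤ}

/-- The integer points of the box with real half-sides `r`, i.e. those with `|x i| ≤ r i`. Real
half-sides allow boxes to be rescaled by `•`. -/
noncomputable def intBox (r : ι → ℝ) : Finset (ι → ℤ) :=
  Fintype.piFinset fun i => Finset.Icc (-⌊r i⌋) ⌊r i⌋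

lemma mem_intBox : x ∈ intBox r ↔ ∀ i, |(x i : ℝ)| ≤ r i := by
  simp only [intBox, Fintype.mem_piFinset, Finset.mem_Icc, abs_le, neg_le, Int.le_floor,
    Int.cast_neg]

lemma card_Icc_neg_floor {a : ℝ} (ha : 0 ≤ a) :
    ((Finset.Icc (-⌊a⌋) ⌊a⌋).card : ℝ) = 2 * ⌊a⌋ + 1 := by
  have h : (((Finset.Icc (-⌊a⌋) ⌊a⌋).card : ℤ)) = 2 * ⌊a⌋ + 1 := by
    have := Int.floor_nonneg.2 ha
    rw [Int.card_Icc]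
    lia
  exact_mod_cast h

lemma card_intBox_le (hr : ∀ i, 0 ≤ r i) : ((intBox r).card : ℝ) ≤ ∏ i, (2 * r i + 1) := by
  rw [intBox, Fintype.card_piFinset, Nat.cast_prod]
  gcongr with i
  rw [card_Icc_neg_floor (hr i)]
  gcongr
  exact Int.floor_le _

lemma card_intBox_le_of_thin (hr : ∀ i, 0 ≤ r i) {m : ι} (hm : r m ≤ 1)
    (hr1 : ∀ i, i ≠ m → 1 ≤ r i) :
    ((intBox r).card : ℝ) ≤ 3 * ∏ i ∈ Finset.univ.erase m, 3 * r i := by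
  refine (card_intBox_le hr).trans ?_
  rw [← Finset.mul_prod_erase _ _ (Finset.mem_univ m)]
  refine mul_le_mul (by linarith) (Finset.prod_le_prod (fun i _ => ?_) fun i hi => ?_)
    (Finset.prod_nonneg fun i _ => ?_) zero_le_three
  · linarith [hr i]
  · linarith [hr1 i (Finset.ne_of_mem_erase hi)]
  · linarith [hr i]

lemma prod_le_card_intBox (hr : ∀ i, 0 ≤ r i) : ∏ i, r i ≤ ((intBox r).card : ℝ) := by
  rw [intBox, Fintype.card_piFinset, Nat.cast_prod]
  gcongr with i
  · exact fun i _ => hr i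
  · rw [card_Icc_neg_floor (hr i)]
    have h0 : (0 : ℝ) ≤ ⌊r i⌋ := Int.cast_nonneg (Int.floor_nonneg.2 (hr i))
    linarith [Int.lt_floor_add_one (r i)]

lemma sub_mem_intBox (hx : x ∈ intBox r) (hy : y ∈ intBox s) : x - y ∈ intBox (r + s) := by
  rw [mem_intBox] at *
  intro i
  rw [Pi.sub_apply, Int.cast_sub]
  exact (abs_sub _ _).trans (add_le_add (hx i) (hy i))

lemma mem_intBox_of_add_nsmul_mem {k : ℕ} (hk : k ≠ 0) (hx : x ∈ intBox r)
    (hxy : x + k • y ∈ intBox r) : y ∈ intBox ((2 / k : ℝ) • r) := by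
  have h := mem_intBox.1 (sub_mem_intBox hxy hx)
  refine mem_intBox.2 fun i => ?_
  have hi : |(k * y i : ℝ)| ≤ r i + r i := by simpa using h i
  rw [abs_mul, Nat.abs_cast] at hi
  rw [Pi.smul_apply, smul_eq_mul, div_mul_eq_mul_div, le_div_iff₀' (by positivity), two_mul]
  exact hi

lemma apply_eq_zero_of_mem_intBox (hx : x ∈ intBox r) {i : ι} (hi : r i < 1) : x i = 0 := by
  have h : |(x i : ℝ)| < 1 := (mem_intBox.1 hx i).trans_lt hi
  exact Int.abs_lt_one_iff.1 (mod_cast h)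

lemma abs_dotProduct_le (hx : x ∈ intBox r) (hy : y ∈ intBox s) :
    |((x ⬝ᵥ y : ℤ) : ℝ)| ≤ r ⬝ᵥ s := by
  rw [mem_intBox] at hx hy
  simp only [dotProduct, Int.cast_sum, Int.cast_mul]
  refine (Finset.abs_sum_le_sum_abs _ _).trans (Finset.sum_le_sum fun i _ => ?_)
  rw [abs_mul]
  exact mul_le_mul (hx i) (hy i) (abs_nonneg _) ((abs_nonneg _).trans (hx i))

end IntBox

section SymplecticForm

variable {ι : Type*} [Fintype ι] {r s : ι → ℝ} {w a : (ι → ℤ) × (ι → ℤ)}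

/-- The standard symplectic form on pairs of integer vectors. Modulo `p` it expresses the duality of
the ratio lattices of two trace-dual bases. -/
def symplecticForm : (ι → ℤ) × (ι → ℤ) →ₗ[ℤ] (ι → ℤ) × (ι → ℤ) →ₗ[ℤ] ℤ :=
  LinearMap.mk₂ ℤ (fun w a => w.1 ⬝ᵥ a.2 - w.2 ⬝ᵥ a.1)
    (fun w w' a => by simp only [Prod.fst_add, Prod.snd_add, add_dotProduct]; ring)
    (fun c w a => by simp only [Prod.smul_fst, Prod.smul_snd, smul_dotProduct, smul_sub])
    (fun w a a' => by simp only [Prod.fst_add, Prod.snd_add, dotProduct_add]; ring)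
    (fun c w a => by simp only [Prod.smul_fst, Prod.smul_snd, dotProduct_smul, smul_sub])

lemma symplecticForm_apply : symplecticForm w a = w.1 ⬝ᵥ a.2 - w.2 ⬝ᵥ a.1 :=
  rfl

lemma eq_zero_of_symplecticForm_quarterTurn_eq_zero
    (h : symplecticForm (a.2, -a.1) a = 0) : a = 0 := by
  rw [symplecticForm_apply, neg_dotProduct] at h
  have h1 : 0 ≤ a.1 ⬝ᵥ a.1 := Finset.sum_nonneg fun _ _ => mul_self_nonneg _
  have h2 : 0 ≤ a.2 ⬝ᵥ a.2 := Finset.sum_nonneg fun _ _ => mul_self_nonneg _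
  exact Prod.ext (dotProduct_self_eq_zero.1 (by linarith)) (dotProduct_self_eq_zero.1 (by linarith))

lemma abs_symplecticForm_le (hw : w.1 ∈ intBox r ∧ w.2 ∈ intBox r)
    (ha : a.1 ∈ intBox s ∧ a.2 ∈ intBox s) : |(symplecticForm w a : ℝ)| ≤ 2 * r ⬝ᵥ s := by
  rw [symplecticForm_apply, Int.cast_sub]
  refine (abs_sub _ _).trans ?_
  linarith [abs_dotProduct_le hw.1 ha.2, abs_dotProduct_le hw.2 ha.1]

end SymplecticForm

section DualSides

variable {ι : Type*} [Fintype ι] {p : ℕ} {H : ι → ℝ}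

/-- The half-sides of the box dual to the box with half-sides `H`, normalised so that points of the
two boxes pair to at most `p / 6` in absolute value. -/
noncomputable def dualSides (p : ℕ) (H : ι → ℝ) : ι → ℝ :=
  fun i => p / (6 * Fintype.card ι * H i)

lemma dualSides_nonneg (hH : ∀ i, 0 < H i) (i : ι) : 0 ≤ dualSides p H i := by
  have := hH i
  unfold dualSides
  positivity

lemma dualSides_mul (hH : ∀ i, 0 < H i) (i : ι) :
    dualSides p H i * H i = p / (6 * Fintype.card ι) := by
  rw [dualSides, div_mul_eq_mul_div, mul_div_mul_right _ _ (hH i).ne']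

lemma dualSides_dotProduct [Nonempty ι] (hH : ∀ i, 0 < H i) : dualSides p H ⬝ᵥ H = p / 6 := by
  simp only [dotProduct, dualSides_mul hH, Finset.sum_const, Finset.card_univ, nsmul_eq_mul]
  field_simp

lemma prod_dualSides_mul_prod (hH : ∀ i, 0 < H i) :
    (∏ i, dualSides p H i) * ∏ i, H i = (p / (6 * Fintype.card ι)) ^ Fintype.card ι := by
  simp only [← Finset.prod_mul_distrib, dualSides_mul hH, Finset.prod_const, Finset.card_univ]

lemma le_mul_dualSides {i : ι} (hH : 0 < H i) (hHp : 2 * H i ^ 2 ≤ p) :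
    H i ≤ 3 * Fintype.card ι * dualSides p H i := by
  have : Nonempty ι := ⟨i⟩
  have h : 3 * Fintype.card ι * dualSides p H i = p / (2 * H i) := by
    rw [dualSides]
    field_simp
    ring
  rw [h, le_div_iff₀ (by positivity)]
  linarith

lemma dualSides_lt_half [NeZero p] {i : ι} (hH : 1 ≤ H i) : dualSides p H i < p / 2 := by
  have : Nonempty ι := ⟨i⟩
  have hι : (1 : ℝ) ≤ Fintype.card ι := mod_cast Fintype.card_pos
  have hp : (0 : ℝ) < p := Nat.cast_pos.2 (NeZero.pos p)
  unfold dualSides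
  gcongr
  nlinarith

lemma two_mul_dualSides_sq_le {i j : ι} (hi : 1 ≤ H i) (hj : 0 < H j) (hjp : 2 * H j ^ 2 ≤ p) :
    2 * dualSides p H i ^ 2 ≤ p * dualSides p H j ^ 2 := by
  have : Nonempty ι := ⟨i⟩
  have hij : 2 * H j ^ 2 ≤ p * H i ^ 2 :=
    hjp.trans (le_mul_of_one_le_right (by positivity) (one_le_pow₀ hi))
  have : 0 < H i := zero_lt_one.trans_le hi
  unfold dualSides
  let c : ℝ := p / (6 * Fintype.card ι * H i * H j)
  calc 2 * (p / (6 * Fintype.card ι * H i)) ^ 2 = c ^ 2 * (2 * H j ^ 2) := by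
        simp only [c]
        field_simp
    _ ≤ c ^ 2 * (p * H i ^ 2) := by gcongr
    _ = p * (p / (6 * Fintype.card ι * H j)) ^ 2 := by
        simp only [c]
        field_simp

end DualSides

section RatioLattice

variable {ι : Type*} [Fintype ι] {F : Type*} [Field F]

/-- The element of `F` with integer coordinates `x` with respect to `ω`. -/
noncomputable abbrev intComb (ω : ι → F) : (ι → ℤ) →ₗ[ℤ] F := Fintype.linearCombination ℤ ω

/-- The defect of `w.2 = w.1 * z` between elements of `F` given by their integer coordinates. -/
noncomputable def ratioMap (ω : ι → F) (z : F) : (ι → ℤ) × (ι → ℤ) →ₗ[ℤ] F :=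
  (LinearMap.mulRight ℤ z ∘ₗ intComb ω).coprod (-intComb ω)

/-- The lattice of the pairs of coordinate vectors of elements `x, y` of `F` with `x * z = y`. -/
noncomputable def ratioLattice (ω : ι → F) (z : F) : Submodule ℤ ((ι → ℤ) × (ι → ℤ)) :=
  LinearMap.ker (ratioMap ω z)

/-- The points of the ratio lattice both of whose components lie in the box `intBox r`. -/
noncomputable def ratioPoints (ω : ι → F) (z : F) (r : ι → ℝ) : Finset ((ι → ℤ) × (ι → ℤ)) :=
  (intBox r ×ˢ intBox r).filter (· ∈ ratioLattice ω z)

/-- The number of linearly independent points among those of the ratio lattice in `intBox r`, i.e.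
the number of successive minima at most `1` of the lattice with respect to the box. -/
noncomputable def ratioRank (ω : ι → F) (z : F) (r : ι → ℝ) : ℕ :=
  Module.finrank ℤ (Submodule.span ℤ (ratioPoints ω z r : Set ((ι → ℤ) × (ι → ℤ))))

variable {ω : ι → F} {z : F} {r : ι → ℝ} {a : (ι → ℤ) × (ι → ℤ)}

lemma ratioMap_apply : ratioMap ω z a = intComb ω a.1 * z - intComb ω a.2 := by
  simp [ratioMap, sub_eq_add_neg]

lemma mem_ratioLattice : a ∈ ratioLattice ω z ↔ intComb ω a.1 * z = intComb ω a.2 := by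
  rw [ratioLattice, LinearMap.mem_ker, ratioMap_apply, sub_eq_zero]

lemma mem_ratioPoints :
    a ∈ ratioPoints ω z r ↔ (a.1 ∈ intBox r ∧ a.2 ∈ intBox r) ∧ a ∈ ratioLattice ω z := by
  rw [ratioPoints, Finset.mem_filter, Finset.mem_product]

lemma span_ratioPoints_le :
    Submodule.span ℤ (ratioPoints ω z r : Set ((ι → ℤ) × (ι → ℤ))) ≤ ratioLattice ω z :=
  Submodule.span_le.2 fun _ ha => (mem_ratioPoints.1 ha).2

lemma card_ratioPoints_le {k n : ℕ} (hk : k ≠ 0) (hn : ratioRank ω z r ≤ n) :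
    (ratioPoints ω z r).card ≤ k ^ n * (ratioPoints ω z ((2 / k : ℝ) • r)).card := by
  have : NeZero k := ⟨hk⟩
  refine (card_le_pow_finrank_span_mul _ k _ fun a ha => ?_).trans
    (Nat.mul_le_mul_right _ (Nat.pow_le_pow_right (Nat.pos_of_ne_zero hk) hn))
  refine (Finset.card_le_card fun b hb => ?_).trans
    (Finset.card_image_le (f := fun c => a + k • c))
  obtain ⟨hb, c, hc, rfl⟩ := Finset.mem_filter.1 hb
  obtain ⟨⟨ha1, ha2⟩, -⟩ := mem_ratioPoints.1 ha
  obtain ⟨⟨hb1, hb2⟩, -⟩ := mem_ratioPoints.1 hb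
  exact Finset.mem_image.2 ⟨c, mem_ratioPoints.2
    ⟨⟨mem_intBox_of_add_nsmul_mem hk ha1 hb1, mem_intBox_of_add_nsmul_mem hk ha2 hb2⟩,
      span_ratioPoints_le hc⟩, rfl⟩

lemma exists_ne_zero_mem_ratioPoints {k n : ℕ} (hk : k ≠ 0) (hn : ratioRank ω z r ≤ n)
    (hcard : k ^ n < (ratioPoints ω z r).card) :
    ∃ a ∈ ratioPoints ω z ((2 / k : ℝ) • r), a ≠ 0 :=
  Finset.exists_mem_ne (Nat.lt_of_mul_lt_mul_left
    (by simpa using hcard.trans_le (card_ratioPoints_le hk hn))) 0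

lemma card_intBox_sq_le_mul_card_image :
    (intBox r).card ^ 2 ≤ (ratioPoints ω z (r + r)).card *
      ((intBox r ×ˢ intBox r).image (ratioMap ω z)).card := by
  rw [sq, ← Finset.card_product]
  refine Finset.card_le_mul_card_image _ _ fun s hs => ?_
  obtain ⟨w₀, hw₀, rfl⟩ := Finset.mem_image.1 hs
  refine Finset.card_le_card_of_injOn (· - w₀) (fun w hw => ?_) sub_left_injective.injOn
  obtain ⟨hw, hww₀⟩ := Finset.mem_filter.1 hw
  rw [Finset.mem_product] at hw hw₀
  exact mem_ratioPoints.2 ⟨⟨sub_mem_intBox hw.1 hw₀.1, sub_mem_intBox hw.2 hw₀.2⟩,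
    LinearMap.sub_mem_ker_iff.2 hww₀⟩

variable {p : ℕ} [Fact p.Prime] [Algebra (ZMod p) F]

lemma dvd_of_intComb_eq_zero (hω : LinearIndependent (ZMod p) ω) {x : ι → ℤ}
    (hx : intComb ω x = 0) (i : ι) : (p : ℤ) ∣ x i := by
  rw [← ZMod.intCast_zmod_eq_zero_iff_dvd]
  refine Fintype.linearIndependent_iff.1 hω (fun i => (x i : ZMod p)) ?_ i
  simpa only [Int.cast_smul_eq_zsmul, Fintype.linearCombination_apply] using hx

lemma eq_zero_of_mem_intBox_of_intComb_eq_zero (hω : LinearIndependent (ZMod p) ω)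
    (hr : ∀ i, r i < p) {x : ι → ℤ} (hx : x ∈ intBox r) (h0 : intComb ω x = 0) : x = 0 := by
  ext i
  refine Int.eq_zero_of_abs_lt_dvd (dvd_of_intComb_eq_zero hω h0 i) ?_
  have h : |(x i : ℝ)| < p := (mem_intBox.1 hx i).trans_lt (hr i)
  exact_mod_cast h

lemma intComb_fst_ne_zero (hω : LinearIndependent (ZMod p) ω) (hr : ∀ i, r i < p)
    (ha : a ∈ ratioPoints ω z r) (ha0 : a ≠ 0) : intComb ω a.1 ≠ 0 := by
  obtain ⟨⟨h1, h2⟩, hz⟩ := mem_ratioPoints.1 ha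
  intro h0
  rw [mem_ratioLattice, h0, zero_mul] at hz
  exact ha0 <| Prod.ext (eq_zero_of_mem_intBox_of_intComb_eq_zero hω hr h1 h0)
    (eq_zero_of_mem_intBox_of_intComb_eq_zero hω hr h2 hz.symm)

/-- A nonzero lattice point determines the ratio `z`. -/
lemma card_le_card_intBox_sq (hω : LinearIndependent (ZMod p) ω) (hr : ∀ i, r i < p)
    {Z : Finset F} (hZ : ∀ z ∈ Z, ∃ a ∈ ratioPoints ω z r, a ≠ 0) :
    Z.card ≤ (intBox r).card ^ 2 := by
  choose! a ha ha0 using hZ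
  rw [sq, ← Finset.card_product]
  refine Finset.card_le_card_of_injOn a
    (fun z hz => Finset.mem_product.2 (mem_ratioPoints.1 (ha z hz)).1) fun z hz w hw hzw => ?_
  have hz' := mem_ratioLattice.1 (mem_ratioPoints.1 (ha z hz)).2
  have hw' := mem_ratioLattice.1 (mem_ratioPoints.1 (ha w hw)).2
  rw [← hzw] at hw'
  exact mul_left_cancel₀ (intComb_fst_ne_zero hω hr (ha z hz) (ha0 z hz)) (hz'.trans hw'.symm)

lemma card_le_prod_sq (hω : LinearIndependent (ZMod p) ω) (hr_ge : ∀ i, 1 ≤ r i)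
    (hr_lt : ∀ i, r i < p) {Z : Finset F} (hZ : ∀ z ∈ Z, ∃ a ∈ ratioPoints ω z r, a ≠ 0) :
    (Z.card : ℝ) ≤ (∏ i, 3 * r i) ^ 2 :=
  calc (Z.card : ℝ) ≤ ((intBox r).card : ℝ) ^ 2 := mod_cast card_le_card_intBox_sq hω hr_lt hZ
    _ ≤ (∏ i, (2 * r i + 1)) ^ 2 := by
      gcongr
      exact card_intBox_le fun i => zero_le_one.trans (hr_ge i)
    _ ≤ (∏ i, 3 * r i) ^ 2 := by
      have h : ∀ i, 0 ≤ 2 * r i + 1 := fun i => by linarith [hr_ge i]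
      gcongr with i
      · exact Finset.prod_nonneg fun i _ => h i
      · exact fun i _ => h i
      · linarith [hr_ge i]

lemma exists_ne_one_le_of_mem_ratioPoints (hω : LinearIndependent (ZMod p) ω)
    (hz : z ∉ (algebraMap (ZMod p) F).range) (hr : ∀ i, r i < p) (ha : a ∈ ratioPoints ω z r)
    (ha0 : a ≠ 0) (j : ι) : ∃ i, i ≠ j ∧ 1 ≤ r i := by
  by_contra! h
  have hcomb : ∀ x ∈ intBox r, intComb ω x = (x j : F) * ω j := by
    intro x hx
    rw [Fintype.linearCombination_apply, Finset.sum_eq_single j, zsmul_eq_mul]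
    · intro i _ hij
      rw [apply_eq_zero_of_mem_intBox hx (h i hij), zero_smul]
    · simp
  obtain ⟨⟨h1, h2⟩, haz⟩ := mem_ratioPoints.1 ha
  have hne := intComb_fst_ne_zero hω hr ha ha0
  rw [mem_ratioLattice, hcomb _ h1, hcomb _ h2] at haz
  rw [hcomb _ h1] at hne
  have hz' : z = (a.2 j : F) / a.1 j := by
    rw [eq_div_iff (left_ne_zero_of_mul hne)]
    refine mul_right_cancel₀ (right_ne_zero_of_mul hne) ?_
    linear_combination haz
  exact hz ⟨(a.2 j : ZMod p) / a.1 j, by rw [hz', map_div₀, map_intCast, map_intCast]⟩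

lemma one_le_of_mem_ratioPoints_of_thin (hι : Fintype.card ι = 3)
    (hω : LinearIndependent (ZMod p) ω) (hz : z ∉ (algebraMap (ZMod p) F).range)
    (hr : ∀ i, r i < p) (ha : a ∈ ratioPoints ω z r) (ha0 : a ≠ 0) {m i : ι} (hm : r m < 1)
    (hi : i ≠ m) : 1 ≤ r i := by
  have hcard : ((Finset.univ.erase m).erase i).card = 1 := by
    rw [Finset.card_erase_of_mem (by simpa using hi), Finset.card_erase_of_mem (Finset.mem_univ m),
      Finset.card_univ, hι]
  obtain ⟨j, hj⟩ := Finset.card_eq_one.1 hcard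
  obtain ⟨l, hlj, hl⟩ := exists_ne_one_le_of_mem_ratioPoints hω hz hr ha ha0 j
  have hlm : l ≠ m := by
    rintro rfl
    exact hm.not_ge hl
  have hli : l = i := by
    by_contra hli
    exact hlj (Finset.mem_singleton.1 (hj ▸ by simp [hli, hlm]))
  exact hli ▸ hl

lemma card_mul_pow_card_sq_le (hω : LinearIndependent (ZMod p) ω) (hr : ∀ i, r i < p / 2)
    {Z : Finset F} (hrank : ∀ z ∈ Z, ratioRank ω z r ≤ Fintype.card ι) {k : ℕ} (hk : k ≠ 0)
    (hkr : ∀ i, k ≤ 4 * r i) (hcard : ∀ z ∈ Z, k ^ Fintype.card ι < (ratioPoints ω z r).card) :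
    (Z.card : ℝ) * (k ^ Fintype.card ι) ^ 2 ≤ (∏ i, 8 * r i) ^ 2 := by
  have hk1 : (1 : ℝ) ≤ k := mod_cast Nat.one_le_iff_ne_zero.2 hk
  have hsmall : ∀ i, ((2 / k : ℝ) • r) i < p := fun i => by
    rw [Pi.smul_apply, smul_eq_mul, div_mul_eq_mul_div, div_lt_iff₀ (by positivity)]
    nlinarith [hr i, hkr i]
  have hlarge : ∀ i, 1 ≤ 2 * ((2 / k : ℝ) • r) i := fun i => by
    rw [Pi.smul_apply, smul_eq_mul, div_mul_eq_mul_div, mul_div_assoc', le_div_iff₀ (by positivity)]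
    linarith [hkr i]
  have hbox : ((intBox ((2 / k : ℝ) • r)).card : ℝ) ≤ ∏ i, 8 * r i / k :=
    (card_intBox_le fun i => by linarith [hlarge i]).trans <|
      Finset.prod_le_prod (fun i _ => by linarith [hlarge i]) fun i _ => by
        refine (add_le_add_right (hlarge i) _).trans (le_of_eq ?_)
        rw [Pi.smul_apply, smul_eq_mul]
        ring
  calc (Z.card : ℝ) * (k ^ Fintype.card ι) ^ 2
      ≤ (∏ i, 8 * r i / k) ^ 2 * (k ^ Fintype.card ι) ^ 2 := by
        gcongr
        calc (Z.card : ℝ) ≤ (intBox ((2 / k : ℝ) • r)).card ^ 2 :=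
            mod_cast card_le_card_intBox_sq hω hsmall fun z hz =>
              exists_ne_zero_mem_ratioPoints hk (hrank z hz) (hcard z hz)
          _ ≤ _ := by gcongr
    _ = (∏ i, 8 * r i) ^ 2 := by
        rw [Finset.prod_div_distrib, Finset.prod_const, Finset.card_univ]
        field_simp

lemma card_image_intComb_fst_ratioPoints (hω : LinearIndependent (ZMod p) ω)
    (hr : ∀ i, r i < p / 2) :
    ((ratioPoints ω z r).image fun a => intComb ω a.1).card = (ratioPoints ω z r).card := by
  have hinj : ∀ x ∈ intBox r, ∀ y ∈ intBox r, intComb ω x = intComb ω y → x = y := by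
    intro x hx y hy hxy
    refine sub_eq_zero.1 (eq_zero_of_mem_intBox_of_intComb_eq_zero hω (fun i => ?_)
      (sub_mem_intBox hx hy) (by rw [map_sub, hxy, sub_self]))
    rw [Pi.add_apply]
    linarith [hr i]
  refine Finset.card_image_of_injOn fun a ha b hb (hab : intComb ω a.1 = intComb ω b.1) => ?_
  obtain ⟨⟨ha1, ha2⟩, haz⟩ := mem_ratioPoints.1 ha
  obtain ⟨⟨hb1, hb2⟩, hbz⟩ := mem_ratioPoints.1 hb
  refine Prod.ext (hinj _ ha1 _ hb1 hab) (hinj _ ha2 _ hb2 ?_)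
  rw [← mem_ratioLattice.1 haz, ← mem_ratioLattice.1 hbz, hab]

section Thin

variable [FiniteDimensional (ZMod p) F] {T : Finset ι} {b : (ι → ℤ) × (ι → ℤ)}

lemma dvd_minor_of_mem_ratioLattice (hω : LinearIndependent (ZMod p) ω)
    (hF : Odd (Module.finrank (ZMod p) F)) (hz : z ∉ (algebraMap (ZMod p) F).range)
    (hT : T.card = 2) (ha : a ∈ ratioLattice ω z) (haT : ∀ i ∉ T, a.1 i = 0 ∧ a.2 i = 0)
    (hb : b ∈ ratioLattice ω z) (hbT : ∀ i ∉ T, b.1 i = 0 ∧ b.2 i = 0) (i j : ι) :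
    (p : ℤ) ∣ a.1 i * b.1 j - b.1 i * a.1 j := by
  by_cases hi : i ∈ T; swap
  · simp [haT i hi, hbT i hi]
  by_cases hj : j ∈ T; swap
  · simp [haT j hj, hbT j hj]
  by_cases hij : i = j
  · simp [hij, mul_comm]
  obtain rfl : {i, j} = T := Finset.eq_of_subset_of_card_le (by simp [Finset.insert_subset_iff, *])
    (by rw [hT, Finset.card_pair hij])
  have hcomb : ∀ x : ι → ℤ, (∀ l ∉ ({i, j} : Finset ι), x l = 0) →
      intComb ω x = (x i : ZMod p) • ω i + (x j : ZMod p) • ω j := by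
    intro x hx
    rw [Fintype.linearCombination_apply, ← Finset.sum_subset (Finset.subset_univ {i, j})
      fun l _ hl => by rw [hx l hl, zero_smul], Finset.sum_pair hij]
    simp only [Int.cast_smul_eq_zsmul]
  have hmul : ∀ c ∈ ratioLattice ω z, (∀ l ∉ ({i, j} : Finset ι), c.1 l = 0 ∧ c.2 l = 0) →
      ((c.1 i : ZMod p) • ω i + (c.1 j : ZMod p) • ω j) * z ∈
        Submodule.span (ZMod p) (Set.range ![ω i, ω j]) := by
    intro c hc hcT
    rw [← hcomb _ fun l hl => (hcT l hl).1, mem_ratioLattice.1 hc, hcomb _ fun l hl => (hcT l hl).2]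
    exact add_mem (Submodule.smul_mem _ _ (Submodule.subset_span ⟨0, rfl⟩))
      (Submodule.smul_mem _ _ (Submodule.subset_span ⟨1, rfl⟩))
  have hind : LinearIndependent (ZMod p) ![ω i, ω j] := by
    convert hω.comp ![i, j] (by simp [Function.Injective, Fin.forall_fin_two, hij, Ne.symm hij])
    ext l
    fin_cases l <;> rfl
  rw [← ZMod.intCast_zmod_eq_zero_iff_dvd]
  push_cast
  exact det_eq_zero_of_mul_mem_span_pair hF hz hind (hmul a ha haT) (hmul b hb hbT)

lemma ratioRank_le_one_of_thin (hω : LinearIndependent (ZMod p) ω)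
    (hF : Odd (Module.finrank (ZMod p) F)) (hz : z ∉ (algebraMap (ZMod p) F).range)
    (hT : T.card = 2) (hrT : ∀ i ∉ T, r i < 1) (hr : ∀ i, 2 * r i ^ 2 < p) :
    ratioRank ω z r ≤ 1 := by
  have hmem : ∀ a ∈ ratioPoints ω z r, a.1 ∈ intBox r ∧ a.2 ∈ intBox r :=
    fun a ha => (mem_ratioPoints.1 ha).1
  have hlat : ∀ a ∈ ratioPoints ω z r, a ∈ ratioLattice ω z :=
    fun a ha => (mem_ratioPoints.1 ha).2
  have hzero : ∀ a ∈ ratioPoints ω z r, ∀ i ∉ T, a.1 i = 0 ∧ a.2 i = 0 := fun a ha i hi =>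
    ⟨apply_eq_zero_of_mem_intBox (hmem a ha).1 (hrT i hi),
      apply_eq_zero_of_mem_intBox (hmem a ha).2 (hrT i hi)⟩
  by_cases! hall : ∀ a ∈ ratioPoints ω z r, a = 0
  · rw [ratioRank, Submodule.span_eq_bot.2 hall, finrank_bot]
    exact zero_le_one
  obtain ⟨a, ha, ha0⟩ := hall
  have hp : (2 : ℝ) ≤ p := mod_cast (Fact.out : p.Prime).two_le
  obtain ⟨j, hj⟩ : ∃ j, a.1 j ≠ 0 := by
    by_contra! h
    have ha1 : a.1 = 0 := funext h
    refine intComb_fst_ne_zero hω (fun i => ?_) ha ha0 (by rw [ha1, map_zero])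
    linarith [lt_half_of_two_mul_sq_lt hp (hr i)]
  let φ : (ι → ℤ) × (ι → ℤ) →ₗ[ℤ] ℤ := LinearMap.proj j ∘ₗ LinearMap.fst ℤ _ _
  refine finrank_span_le_one_of_smul_eq_smul φ (u := a) hj fun b hb => ?_
  have hfst : a.1 j • b.1 = b.1 j • a.1 := by
    ext i
    exact mul_eq_mul_of_dvd_sub (mem_intBox.1 (hmem a ha).1 j) (mem_intBox.1 (hmem b hb).1 j)
      (mem_intBox.1 (hmem b hb).1 i) (mem_intBox.1 (hmem a ha).1 i) (hr j) (hr i)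
      (dvd_minor_of_mem_ratioLattice hω hF hz hT (hlat a ha) (hzero a ha) (hlat b hb) (hzero b hb)
        j i)
  have hsnd : a.1 j • b.2 = b.1 j • a.2 := by
    ext i
    refine mul_eq_mul_of_dvd_sub (mem_intBox.1 (hmem a ha).1 j) (mem_intBox.1 (hmem b hb).1 j)
      (mem_intBox.1 (hmem b hb).2 i) (mem_intBox.1 (hmem a ha).2 i) (hr j) (hr i)
      (dvd_of_intComb_eq_zero hω (x := a.1 j • b.2 - b.1 j • a.2) ?_ i)
    rw [map_sub, map_zsmul, map_zsmul, ← mem_ratioLattice.1 (hlat a ha),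
      ← mem_ratioLattice.1 (hlat b hb), ← smul_mul_assoc, ← smul_mul_assoc, ← map_zsmul,
      ← map_zsmul, hfst, sub_self]
  exact Prod.ext hfst hsnd

/-- The lattice points in a thin box are proportional, so that some nonzero one of them survives
shrinking the box by a factor of about `q`. -/
lemma card_mul_pow_four_le_of_thin (hι : Fintype.card ι = 3) (hω : LinearIndependent (ZMod p) ω)
    (hF : Odd (Module.finrank (ZMod p) F)) {Z : Finset F}
    (hZ : ∀ z ∈ Z, z ∉ (algebraMap (ZMod p) F).range) (hr0 : ∀ i, 0 ≤ r i)
    (hr : ∀ i, 2 * r i ^ 2 < p) {m : ι} (hm : r m < 1 / 2) {q : ℕ} (hq : q ≠ 0)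
    (hcard : ∀ z ∈ Z, q < (ratioPoints ω z r).card) :
    (Z.card : ℝ) * q ^ 4 ≤ (3 * ∏ i ∈ Finset.univ.erase m, 6 * r i) ^ 2 := by
  obtain rfl | ⟨z₀, hz₀⟩ := Z.eq_empty_or_nonempty
  · rw [Finset.card_empty, Nat.cast_zero, zero_mul]
    positivity
  have hp : (2 : ℝ) ≤ p := mod_cast (Fact.out : p.Prime).two_le
  have hT : (Finset.univ.erase m).card = 2 := by
    rw [Finset.card_erase_of_mem (Finset.mem_univ m), Finset.card_univ, hι]
  have : (0 : ℝ) < q := by positivity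
  have hq2 : (2 / q : ℝ) ≤ 2 := div_le_self zero_le_two (mod_cast Nat.one_le_iff_ne_zero.2 hq)
  let r' : ι → ℝ := (2 / q : ℝ) • r
  have hr'_le : ∀ i, r' i ≤ 2 * r i := fun i => mul_le_mul_of_nonneg_right hq2 (hr0 i)
  have hr'p : ∀ i, r' i < p := fun i => by
    linarith [hr'_le i, lt_half_of_two_mul_sq_lt hp (hr i)]
  have hr'm : r' m < 1 := by linarith [hr'_le m]
  have hpoint : ∀ z ∈ Z, ∃ a ∈ ratioPoints ω z r', a ≠ 0 := fun z hz =>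
    exists_ne_zero_mem_ratioPoints hq
      (ratioRank_le_one_of_thin hω hF (hZ z hz) hT
        (fun i hi => by
          obtain rfl : i = m := by simpa using hi
          linarith) hr)
      (by simpa using hcard z hz)
  have hbox : ((intBox r').card : ℝ) ≤ 3 * ∏ i ∈ Finset.univ.erase m, 3 * r' i := by
    obtain ⟨a, ha, ha0⟩ := hpoint z₀ hz₀
    exact card_intBox_le_of_thin (fun i => mul_nonneg (by positivity) (hr0 i)) hr'm.le fun i hi =>
      one_le_of_mem_ratioPoints_of_thin hι hω (hZ z₀ hz₀) hr'p ha ha0 hr'm hi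
  calc (Z.card : ℝ) * q ^ 4 ≤ (3 * ∏ i ∈ Finset.univ.erase m, 3 * r' i) ^ 2 * q ^ 4 := by
        gcongr
        calc (Z.card : ℝ) ≤ (intBox r').card ^ 2 := mod_cast card_le_card_intBox_sq hω hr'p hpoint
          _ ≤ _ := by gcongr
    _ = (3 * ∏ i ∈ Finset.univ.erase m, 6 * r i) ^ 2 := by
        have : ∀ i, 3 * r' i = 6 * r i / q := fun i => by
          simp only [r', Pi.smul_apply, smul_eq_mul]
          ring
        simp only [this, Finset.prod_div_distrib, Finset.prod_const, hT]
        field_simp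

lemma card_mul_sq_le_of_thin (hι : Fintype.card ι = 3) (hω : LinearIndependent (ZMod p) ω)
    (hF : Odd (Module.finrank (ZMod p) F)) {Z : Finset F}
    (hZ : ∀ z ∈ Z, z ∉ (algebraMap (ZMod p) F).range) (hr0 : ∀ i, 0 ≤ r i)
    (hr : ∀ i, 2 * r i ^ 2 < p) {m : ι} (hm : r m < 1 / 2) {t : ℝ} (ht : 1 < t)
    (hcard : ∀ z ∈ Z, t ≤ (ratioPoints ω z r).card) :
    (Z.card : ℝ) * t ^ 2 ≤ (6 * ∏ i ∈ Finset.univ.erase m, 6 * r i) ^ 2 := by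
  obtain ⟨q, hq, hqt, htq⟩ := exists_nat_pow_lt_le ht one_ne_zero
  rw [pow_one] at hqt htq
  have hq1 : (1 : ℝ) ≤ q := mod_cast Nat.one_le_iff_ne_zero.2 hq
  calc (Z.card : ℝ) * t ^ 2 ≤ Z.card * (2 * q ^ 2) ^ 2 := by
        gcongr
        exact htq.trans (by gcongr; exact le_self_pow₀ hq1 two_ne_zero)
    _ = 4 * (Z.card * q ^ 4 : ℝ) := by ring
    _ ≤ 4 * (3 * ∏ i ∈ Finset.univ.erase m, 6 * r i) ^ 2 := by
        gcongr
        exact card_mul_pow_four_le_of_thin hι hω hF hZ hr0 hr hm hq fun z hz =>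
          mod_cast hqt.trans_le (hcard z hz)
    _ = (6 * ∏ i ∈ Finset.univ.erase m, 6 * r i) ^ 2 := by ring

lemma card_mul_sq_le_of_four_mul_lt (hι : Fintype.card ι = 3)
    (hω : LinearIndependent (ZMod p) ω) (hF : Odd (Module.finrank (ZMod p) F)) {m : ι}
    (hr0 : ∀ i, 0 ≤ r i) (hrm : ∀ i, 2 * r i ^ 2 ≤ p * r m ^ 2) {Z : Finset F}
    (hZ : ∀ z ∈ Z, z ∉ (algebraMap (ZMod p) F).range) (hrank : ∀ z ∈ Z, ratioRank ω z r ≤ 3)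
    {k : ℕ} (hk : 4 * r m < k) {t : ℝ} (hkt : (k : ℝ) ^ 3 < t)
    (hcard : ∀ z ∈ Z, t ≤ (ratioPoints ω z r).card) :
    (Z.card : ℝ) * t ^ 2 ≤ (864 * k * ∏ i ∈ Finset.univ.erase m, r i) ^ 2 := by
  have hk0 : (0 : ℝ) < k := by linarith [hr0 m]
  have hp0 : (0 : ℝ) < p := mod_cast (Fact.out : p.Prime).pos
  let r' : ι → ℝ := (2 / k : ℝ) • r
  have hr' : ∀ i, r' i = 2 * r i / k := fun i => div_mul_eq_mul_div _ _ _
  have hthin : (Z.card : ℝ) * (t / k ^ 3) ^ 2 ≤ (6 * ∏ i ∈ Finset.univ.erase m, 6 * r' i) ^ 2 := by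
    refine card_mul_sq_le_of_thin (r := r') hι hω hF hZ
      (fun i => mul_nonneg (by positivity) (hr0 i)) (fun i => ?_) ?_
      ((one_lt_div₀ (by positivity)).2 hkt) fun z hz => ?_
    · rw [hr', div_pow, mul_div_assoc', div_lt_iff₀ (by positivity)]
      have hsq : (4 * r m) ^ 2 < k ^ 2 := pow_lt_pow_left₀ hk (by linarith [hr0 m]) two_ne_zero
      nlinarith [hrm i]
    · rw [hr', div_lt_iff₀ hk0]
      linarith
    · refine (div_le_iff₀' (by positivity)).2 ((hcard z hz).trans ?_)
      exact_mod_cast card_ratioPoints_le (by exact_mod_cast hk0.ne') (hrank z hz)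
  have hT : (Finset.univ.erase m).card = 2 := by
    rw [Finset.card_erase_of_mem (Finset.mem_univ m), Finset.card_univ, hι]
  have hprod : ∏ i ∈ Finset.univ.erase m, 6 * r' i
      = 12 ^ 2 * (∏ i ∈ Finset.univ.erase m, r i) / k ^ 2 := by
    rw [← hT, ← Finset.prod_const, ← Finset.prod_const, ← Finset.prod_mul_distrib,
      ← Finset.prod_div_distrib]
    exact Finset.prod_congr rfl fun i _ => by rw [hr']; ring
  calc (Z.card : ℝ) * t ^ 2 = Z.card * (t / k ^ 3) ^ 2 * (k ^ 3) ^ 2 := by field_simp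
    _ ≤ (6 * (12 ^ 2 * (∏ i ∈ Finset.univ.erase m, r i) / k ^ 2)) ^ 2 * (k ^ 3) ^ 2 := by
        rw [← hprod]
        gcongr
    _ = (864 * k * ∏ i ∈ Finset.univ.erase m, r i) ^ 2 := by
        field_simp
        ring

lemma card_mul_sq_le_of_ratioRank_le_three (hι : Fintype.card ι = 3)
    (hω : LinearIndependent (ZMod p) ω) (hF : Odd (Module.finrank (ZMod p) F))
    (hr_ge : ∀ i, 1 / 10 ≤ r i) (hr_lt : ∀ i, r i < p / 2)
    (hr : ∀ i j, 2 * r i ^ 2 ≤ p * r j ^ 2) {Z : Finset F}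
    (hZ : ∀ z ∈ Z, z ∉ (algebraMap (ZMod p) F).range) (hrank : ∀ z ∈ Z, ratioRank ω z r ≤ 3)
    {t : ℝ} (ht : 1 < t) (hcard : ∀ z ∈ Z, t ≤ (ratioPoints ω z r).card) :
    (Z.card : ℝ) * t ^ 2 ≤ (12096 * ∏ i, r i) ^ 2 := by
  have hr0 : ∀ i, 0 ≤ r i := fun i => by linarith [hr_ge i]
  have : Nonempty ι := Fintype.card_pos_iff.1 (by lia)
  obtain ⟨m, hm⟩ := Finite.exists_min r
  obtain ⟨k, hk, hkt, htk⟩ := exists_nat_pow_lt_le ht three_ne_zero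
  obtain hkm | hkm := le_or_gt (k : ℝ) (4 * r m)
  · have hgeneric := card_mul_pow_card_sq_le hω hr_lt (by rwa [hι]) hk
      (fun i => hkm.trans (by linarith [hm i])) fun z hz => by
        rw [hι]
        exact_mod_cast hkt.trans_le (hcard z hz)
    rw [hι, Finset.prod_mul_distrib, Finset.prod_const, Finset.card_univ, hι] at hgeneric
    calc (Z.card : ℝ) * t ^ 2 ≤ Z.card * ((2 * k) ^ 3) ^ 2 := by gcongr
      _ = 64 * (Z.card * (k ^ 3) ^ 2 : ℝ) := by ring
      _ ≤ 64 * (8 ^ 3 * ∏ i, r i) ^ 2 := by gcongr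
      _ = (4096 * ∏ i, r i) ^ 2 := by ring
      _ ≤ (12096 * ∏ i, r i) ^ 2 := by
        have := Finset.prod_nonneg fun i (_ : i ∈ Finset.univ) => hr0 i
        gcongr
        norm_num
  · let l := ⌊4 * r m⌋₊ + 1
    have hlk : l ≤ k := (Nat.floor_lt (by linarith [hr0 m])).2 hkm
    have hl : (l : ℝ) ≤ 14 * r m := by
      have := Nat.floor_le (show 0 ≤ 4 * r m by linarith [hr0 m])
      simp only [l]
      push_cast
      linarith [hr_ge m]
    calc (Z.card : ℝ) * t ^ 2 ≤ (864 * l * ∏ i ∈ Finset.univ.erase m, r i) ^ 2 :=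
          card_mul_sq_le_of_four_mul_lt hι hω hF hr0 (hr · m) hZ hrank
            (mod_cast Nat.lt_floor_add_one (4 * r m)) (lt_of_le_of_lt (by gcongr) hkt) hcard
      _ ≤ (864 * (14 * r m) * ∏ i ∈ Finset.univ.erase m, r i) ^ 2 := by
        have := Finset.prod_nonneg fun i (_ : i ∈ Finset.univ.erase m) => hr0 i
        gcongr
      _ = (12096 * ∏ i, r i) ^ 2 := by
        rw [← Finset.mul_prod_erase _ _ (Finset.mem_univ m)]
        ring

end Thin

section Duality

variable [Finite F] {b : Module.Basis ι (ZMod p) F} {H : ι → ℝ}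

lemma trace_intComb_traceDual_mul_intComb (b : Module.Basis ι (ZMod p) F) (x y : ι → ℤ) :
    Algebra.trace (ZMod p) F (intComb b.traceDual x * intComb b y) = ((x ⬝ᵥ y : ℤ) : ZMod p) := by
  simp only [Fintype.linearCombination_apply, Finset.sum_mul_sum, map_sum, smul_mul_smul_comm,
    map_zsmul, b.trace_traceDual_mul, dotProduct, Int.cast_sum]
  simp

lemma trace_ratioMap_traceDual_mul {w : (ι → ℤ) × (ι → ℤ)} (ha : a ∈ ratioLattice b z) :
    Algebra.trace (ZMod p) F (ratioMap b.traceDual z w * intComb b a.1) =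
      (symplecticForm w a : ZMod p) := by
  rw [ratioMap_apply, sub_mul, mul_assoc, mul_comm z, mem_ratioLattice.1 ha, map_sub,
    trace_intComb_traceDual_mul_intComb, trace_intComb_traceDual_mul_intComb,
    symplecticForm_apply, Int.cast_sub]

lemma ratioRank_traceDual_add_ratioRank_le (hrH : 2 * r ⬝ᵥ H < p) :
    ratioRank b.traceDual z r + ratioRank b z H ≤ 2 * Fintype.card ι := by
  have horth : ∀ w ∈ ratioPoints b.traceDual z r, ∀ a ∈ ratioPoints b z H,
      symplecticForm w a = 0 := by
    intro w hw a ha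
    obtain ⟨hwr, hwz⟩ := mem_ratioPoints.1 hw
    obtain ⟨haH, haz⟩ := mem_ratioPoints.1 ha
    refine Int.eq_zero_of_abs_lt_dvd (m := p) ?_ ?_
    · rw [← ZMod.intCast_zmod_eq_zero_iff_dvd, ← trace_ratioMap_traceDual_mul haz,
        LinearMap.mem_ker.1 hwz, zero_mul, map_zero]
    · exact_mod_cast (abs_symplecticForm_le hwr haH).trans_lt hrH
  have h := finrank_span_add_finrank_span_le symplecticForm
    ((LinearMap.snd ℤ _ _).prod (-LinearMap.fst ℤ _ _))
    (fun w => eq_zero_of_symplecticForm_quarterTurn_eq_zero) horth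
  rwa [Module.finrank_prod, Module.finrank_fintype_fun_eq_card, ← two_mul] at h

/-- The Fourier transform of the points of the box `H` is concentrated on the box `r`. -/
lemma card_intBox_sq_mul_card_ratioPoints_le (hrH : r ⬝ᵥ H ≤ p / 12) (hH : ∀ i, H i < p / 2) :
    ((intBox r).card : ℝ) ^ 2 * (ratioPoints b z H).card ≤
      4 * Nat.card F * (ratioPoints b.traceDual z (r + r)).card := by
  have := Fintype.ofFinite F
  let S := (intBox r ×ˢ intBox r).image (ratioMap b.traceDual z)
  let X := (ratioPoints b z H).image fun a => intComb b a.1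
  have huncertainty : (1 / 2 : ℝ) ^ 2 * (S.card * X.card) ≤ Fintype.card F := by
    refine card_mul_card_le_of_le_re (traceAddChar_isPrimitive p F) (by norm_num) ?_
    simp only [S, X, Finset.forall_mem_image]
    intro w hw a ha
    obtain ⟨haH, haz⟩ := mem_ratioPoints.1 ha
    rw [traceAddChar_apply, trace_ratioMap_traceDual_mul haz]
    refine half_le_re_stdAddChar ?_
    linarith [abs_symplecticForm_le (Finset.mem_product.1 hw) haH]
  have hX : X.card = (ratioPoints b z H).card :=
    card_image_intComb_fst_ratioPoints b.linearIndependent hH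
  have hS : ((intBox r).card : ℝ) ^ 2 ≤ (ratioPoints b.traceDual z (r + r)).card * S.card :=
    mod_cast card_intBox_sq_le_mul_card_image
  rw [hX] at huncertainty
  rw [Nat.card_eq_fintype_card]
  calc ((intBox r).card : ℝ) ^ 2 * (ratioPoints b z H).card
      ≤ (ratioPoints b.traceDual z (r + r)).card * S.card * (ratioPoints b z H).card := by gcongr
    _ = (ratioPoints b.traceDual z (r + r)).card *
          (4 * ((1 / 2) ^ 2 * (S.card * (ratioPoints b z H).card))) := by ring
    _ ≤ (ratioPoints b.traceDual z (r + r)).card * (4 * Fintype.card F) := by gcongr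
    _ = 4 * Fintype.card F * (ratioPoints b.traceDual z (r + r)).card := by ring

end Duality

section LevelSets

lemma natCard_eq_pow_card_of_basis (b : Module.Basis ι (ZMod p) F) :
    Nat.card F = p ^ Fintype.card ι := by
  have := Module.Finite.of_basis b
  rw [Module.natCard_eq_pow_finrank (K := ZMod p), Nat.card_zmod, Module.finrank_eq_card_basis b]

variable [Finite F] {b : Module.Basis ι (ZMod p) F} {H : ι → ℝ}

lemma prod_dualSides_sq_mul_card_ratioPoints_le [Nonempty ι] (hH_pos : ∀ i, 0 < H i)
    (hH_lt : ∀ i, H i < p / 2) :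
    (∏ i, dualSides p H i) ^ 2 * (ratioPoints b z H).card ≤
      4 ^ (Fintype.card ι + 1) * p ^ Fintype.card ι *
        (ratioPoints b.traceDual z (dualSides p H)).card := by
  let h : ι → ℝ := (1 / 2 : ℝ) • dualSides p H
  have hadd : h + h = dualSides p H := by
    rw [← add_smul, add_halves, one_smul]
  have hdot : h ⬝ᵥ H ≤ p / 12 := by
    rw [smul_dotProduct, dualSides_dotProduct hH_pos, smul_eq_mul]
    linarith
  have h_nonneg : ∀ i, 0 ≤ h i := fun i =>
    mul_nonneg one_half_pos.le (dualSides_nonneg hH_pos i)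
  have hprod : ∏ i, dualSides p H i = 2 ^ Fintype.card ι * ∏ i, h i := by
    rw [← Finset.card_univ, ← Finset.prod_const, ← Finset.prod_mul_distrib]
    simp [h]
  have hdual := card_intBox_sq_mul_card_ratioPoints_le (b := b) (z := z) hdot hH_lt
  rw [hadd, natCard_eq_pow_card_of_basis b, Nat.cast_pow] at hdual
  calc (∏ i, dualSides p H i) ^ 2 * ((ratioPoints b z H).card : ℝ)
      = 4 ^ Fintype.card ι * ((∏ i, h i) ^ 2 * (ratioPoints b z H).card) := by
        rw [hprod, mul_pow, ← pow_mul, mul_comm _ 2, pow_mul]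
        norm_num [mul_assoc]
    _ ≤ 4 ^ Fintype.card ι * (((intBox h).card : ℝ) ^ 2 * (ratioPoints b z H).card) := by
        have := Finset.prod_nonneg fun i (_ : i ∈ Finset.univ) => h_nonneg i
        gcongr
        exact prod_le_card_intBox h_nonneg
    _ ≤ 4 ^ Fintype.card ι * (4 * p ^ Fintype.card ι *
          (ratioPoints b.traceDual z (dualSides p H)).card) := by gcongr
    _ = _ := by ring

variable (hι : Fintype.card ι = 3) (hH : ∀ i, 1 ≤ H i) (hHp : ∀ i, 2 * H i ^ 2 < p)
variable {Z : Finset F} (hZ : ∀ z ∈ Z, z ∉ (algebraMap (ZMod p) F).range) {t : ℝ} (ht : 0 ≤ t)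
include hι hH hHp hZ ht

lemma card_mul_sq_le_of_ratioRank_dualSides_le_three (hω : LinearIndependent (ZMod p) ω)
    (hF : Odd (Module.finrank (ZMod p) F)) (hZ_card : (Z.card : ℝ) ≤ (27 * ∏ i, H i) ^ 2)
    (hrank : ∀ z ∈ Z, ratioRank ω z (dualSides p H) ≤ 3)
    (hcard : ∀ z ∈ Z, t ≤ (ratioPoints ω z (dualSides p H)).card) :
    (Z.card : ℝ) * t ^ 2 ≤ (20000 * ∏ i, dualSides p H i) ^ 2 := by
  have hH_pos : ∀ i, 0 < H i := fun i => zero_lt_one.trans_le (hH i)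
  have hH_le : ∀ i, H i ≤ 9 * dualSides p H i := fun i => by
    have := le_mul_dualSides (hH_pos i) (hHp i).le
    norm_num [hι] at this
    exact this
  have hdual_nonneg : 0 ≤ ∏ i, dualSides p H i :=
    Finset.prod_nonneg fun i _ => dualSides_nonneg hH_pos i
  obtain ht1 | ht1 := le_or_gt t 1
  · have hprod : ∏ i, H i ≤ 9 ^ 3 * ∏ i, dualSides p H i :=
      calc ∏ i, H i ≤ ∏ i, 9 * dualSides p H i :=
            Finset.prod_le_prod (fun i _ => (hH_pos i).le) fun i _ => hH_le i
        _ = 9 ^ 3 * ∏ i, dualSides p H i := by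
            rw [Finset.prod_mul_distrib, Finset.prod_const, Finset.card_univ, hι]
    have hprod_nonneg : 0 ≤ ∏ i, H i := Finset.prod_nonneg fun i _ => (hH_pos i).le
    calc (Z.card : ℝ) * t ^ 2 ≤ Z.card :=
          mul_le_of_le_one_right (Nat.cast_nonneg _) (pow_le_one₀ ht ht1)
      _ ≤ (27 * ∏ i, H i) ^ 2 := hZ_card
      _ ≤ (20000 * ∏ i, dualSides p H i) ^ 2 := by
          gcongr ?_ ^ 2
          linarith
  · calc (Z.card : ℝ) * t ^ 2 ≤ (12096 * ∏ i, dualSides p H i) ^ 2 :=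
          card_mul_sq_le_of_ratioRank_le_three hι hω hF (fun i => by linarith [hH i, hH_le i])
            (fun i => dualSides_lt_half (hH i))
            (fun i j => two_mul_dualSides_sq_le (hH i) (hH_pos j) (hHp j).le) hZ hrank ht1 hcard
      _ ≤ (20000 * ∏ i, dualSides p H i) ^ 2 := by
          gcongr
          norm_num

lemma card_mul_sq_le_of_three_lt_ratioRank (hZ_card : (Z.card : ℝ) ≤ (27 * ∏ i, H i) ^ 2)
    (hrank : ∀ z ∈ Z, 3 < ratioRank b z H) (hcard : ∀ z ∈ Z, t ≤ (ratioPoints b z H).card) :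
    (Z.card : ℝ) * t ^ 2 ≤ (3 * 10 ^ 10 * ∏ i, H i) ^ 2 := by
  have : Nonempty ι := Fintype.card_pos_iff.1 (by lia)
  have hp : (2 : ℝ) ≤ p := mod_cast (Fact.out : p.Prime).two_le
  have hH_pos : ∀ i, 0 < H i := fun i => zero_lt_one.trans_le (hH i)
  let P := ∏ i, H i
  let D := ∏ i, dualSides p H i
  have hP : 0 < P := Finset.prod_pos fun i _ => hH_pos i
  have hDP : D * P = (p / 18) ^ 3 := by
    simp only [D, P, prod_dualSides_mul_prod hH_pos, hι]
    norm_num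
  have hD : 0 < D := pos_of_mul_pos_left (hDP ▸ by positivity) hP.le
  let t' := D ^ 2 * t / (4 ^ 4 * p ^ 3)
  have hrank' : ∀ z ∈ Z, ratioRank b.traceDual z (dualSides p H) ≤ 3 := fun z hz => by
    have := ratioRank_traceDual_add_ratioRank_le (b := b) (z := z) (r := dualSides p H) (H := H)
      (by rw [dualSides_dotProduct hH_pos]; linarith)
    have := hrank z hz
    lia
  have hcard' : ∀ z ∈ Z, t' ≤ (ratioPoints b.traceDual z (dualSides p H)).card := fun z hz => by
    have hdual := prod_dualSides_sq_mul_card_ratioPoints_le (b := b) (z := z) hH_pos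
      fun i => lt_half_of_two_mul_sq_lt hp (hHp i)
    rw [hι] at hdual
    rw [div_le_iff₀' (by positivity)]
    exact (mul_le_mul_of_nonneg_left (hcard z hz) (sq_nonneg D)).trans hdual
  have hF : Odd (Module.finrank (ZMod p) F) :=
    Nat.odd_iff.2 (by rw [Module.finrank_eq_card_basis b, hι])
  have hlevel : (Z.card : ℝ) * t' ^ 2 ≤ (20000 * D) ^ 2 :=
    card_mul_sq_le_of_ratioRank_dualSides_le_three hι hH hHp hZ (by positivity)
      b.traceDual.linearIndependent hF hZ_card hrank' hcard'
  calc (Z.card : ℝ) * t ^ 2 = Z.card * t' ^ 2 * (4 ^ 4 * p ^ 3 / D ^ 2) ^ 2 := by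
        simp only [t']
        field_simp
    _ ≤ (20000 * D) ^ 2 * (4 ^ 4 * p ^ 3 / D ^ 2) ^ 2 := by gcongr
    _ = (20000 * 4 ^ 4 * 18 ^ 3 * P) ^ 2 := by
        rw [show (p : ℝ) ^ 3 = 18 ^ 3 * (D * P) by rw [hDP]; ring]
        field_simp
    _ ≤ (3 * 10 ^ 10 * P) ^ 2 := by
        gcongr ?_ ^ 2
        linarith

lemma card_mul_sq_le_of_le_card_ratioPoints (hZ_ne : ∀ z ∈ Z, ∃ a ∈ ratioPoints b z H, a ≠ 0)
    (hcard : ∀ z ∈ Z, t ≤ (ratioPoints b z H).card) :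
    (Z.card : ℝ) * t ^ 2 ≤ (10 ^ 11 * ∏ i, H i) ^ 2 := by
  have hp : (2 : ℝ) ≤ p := mod_cast (Fact.out : p.Prime).two_le
  have hH_lt : ∀ i, H i < p / 2 := fun i => lt_half_of_two_mul_sq_lt hp (hHp i)
  have hprod : 0 ≤ ∏ i, H i := Finset.prod_nonneg fun i _ => zero_le_one.trans (hH i)
  have hZ_card : (Z.card : ℝ) ≤ (27 * ∏ i, H i) ^ 2 := by
    have h := card_le_prod_sq b.linearIndependent hH (fun i => by linarith [hH_lt i]) hZ_ne
    rw [Finset.prod_mul_distrib, Finset.prod_const, Finset.card_univ, hι] at h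
    norm_num at h
    exact h
  obtain ht1 | ht1 := le_or_gt t 1
  · calc (Z.card : ℝ) * t ^ 2 ≤ Z.card :=
          mul_le_of_le_one_right (Nat.cast_nonneg _) (pow_le_one₀ ht ht1)
      _ ≤ (27 * ∏ i, H i) ^ 2 := hZ_card
      _ ≤ (10 ^ 11 * ∏ i, H i) ^ 2 := by
          gcongr
          norm_num
  let Zlow := Z.filter (ratioRank b · H ≤ 3)
  let Zhigh := Z.filter (¬ratioRank b · H ≤ 3)
  have hlow : (Zlow.card : ℝ) * t ^ 2 ≤ (12096 * ∏ i, H i) ^ 2 := by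
    have hF : Odd (Module.finrank (ZMod p) F) :=
      Nat.odd_iff.2 (by rw [Module.finrank_eq_card_basis b, hι])
    refine card_mul_sq_le_of_ratioRank_le_three hι b.linearIndependent hF
      (fun i => by linarith [hH i]) hH_lt (fun i j => ?_)
      (fun z hz => hZ z (Finset.mem_of_mem_filter z hz)) (fun z hz => (Finset.mem_filter.1 hz).2)
      ht1 (fun z hz => hcard z (Finset.mem_of_mem_filter z hz))
    exact (hHp i).le.trans (le_mul_of_one_le_right (by positivity) (one_le_pow₀ (hH j)))
  have hhigh : (Zhigh.card : ℝ) * t ^ 2 ≤ (3 * 10 ^ 10 * ∏ i, H i) ^ 2 :=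
    card_mul_sq_le_of_three_lt_ratioRank hι hH hHp
      (fun z hz => hZ z (Finset.mem_of_mem_filter z hz)) ht
      (le_trans (mod_cast Finset.card_filter_le _ _) hZ_card)
      (fun z hz => not_le.1 (Finset.mem_filter.1 hz).2)
      (fun z hz => hcard z (Finset.mem_of_mem_filter z hz))
  have hsplit : (Z.card : ℝ) = Zlow.card + Zhigh.card :=
    mod_cast (Finset.card_filter_add_card_filter_not _).symm
  calc (Z.card : ℝ) * t ^ 2 = Zlow.card * t ^ 2 + Zhigh.card * t ^ 2 := by
        rw [hsplit, add_mul]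
    _ ≤ (12096 * ∏ i, H i) ^ 2 + (3 * 10 ^ 10 * ∏ i, H i) ^ 2 := add_le_add hlow hhigh
    _ ≤ (10 ^ 11 * ∏ i, H i) ^ 2 := by linarith [sq_nonneg (∏ i, H i)]

omit ht in
lemma sum_sq_card_ratioPoints_le (hp : 3 ≤ p)
    (hZ_ne : ∀ z ∈ Z, ∃ a ∈ ratioPoints b z H, a ≠ 0) :
    ∑ z ∈ Z, ((ratioPoints b z H).card : ℝ) ^ 2 ≤
      8 * (10 ^ 11 * ∏ i, H i) ^ 2 * Real.log p := by
  have := Fintype.ofFinite F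
  have hp' : (3 : ℝ) ≤ p := mod_cast hp
  have hH_lt : ∀ i, H i < p / 2 := fun i => lt_half_of_two_mul_sq_lt (by linarith) (hHp i)
  have hcard_le : ∀ z ∈ Z, (ratioPoints b z H).card ≤ p ^ 3 := fun z _ => by
    rw [← card_image_intComb_fst_ratioPoints b.linearIndependent hH_lt, ← hι,
      ← natCard_eq_pow_card_of_basis b, Nat.card_eq_fintype_card]
    exact Finset.card_le_univ _
  have hlog : 1 ≤ Real.log p := by
    rw [Real.le_log_iff_exp_le (by linarith)]
    exact Real.exp_one_lt_three.le.trans hp'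
  calc ∑ z ∈ Z, ((ratioPoints b z H).card : ℝ) ^ 2
      ≤ 2 * (10 ^ 11 * ∏ i, H i) ^ 2 * (1 + Real.log (p ^ 3 : ℕ)) :=
        sum_sq_le_of_card_mul_sq_le hcard_le fun t _ =>
          card_mul_sq_le_of_le_card_ratioPoints hι hH hHp
            (fun z hz => hZ z (Finset.mem_of_mem_filter z hz)) (Nat.cast_nonneg t)
            (fun z hz => hZ_ne z (Finset.mem_of_mem_filter z hz))
            (fun z hz => mod_cast (Finset.mem_filter.1 hz).2)
    _ = 2 * (10 ^ 11 * ∏ i, H i) ^ 2 * (1 + 3 * Real.log p) := by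
        rw [Nat.cast_pow, Real.log_pow, Nat.cast_ofNat]
    _ ≤ 2 * (10 ^ 11 * ∏ i, H i) ^ 2 * (4 * Real.log p) := by
        gcongr
        linarith
    _ = 8 * (10 ^ 11 * ∏ i, H i) ^ 2 * Real.log p := by ring

end LevelSets

lemma card_filter_mul_eq_le :
    (((intBox r).image (intComb ω) ×ˢ (intBox r).image (intComb ω)).filter
      fun q => q.1 * z = q.2).card ≤ (ratioPoints ω z r).card := by
  refine (Finset.card_le_card fun q hq => ?_).trans
    (Finset.card_image_le (f := Prod.map (intComb ω) (intComb ω)))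
  obtain ⟨hq, hqz⟩ := Finset.mem_filter.1 hq
  rw [← Finset.prodMap_image_product] at hq
  obtain ⟨a, ha, rfl⟩ := Finset.mem_image.1 hq
  exact Finset.mem_image_of_mem _
    (mem_ratioPoints.2 ⟨Finset.mem_product.1 ha, mem_ratioLattice.2 hqz⟩)

lemma exists_ne_zero_mem_ratioPoints_of_eq_mul_inv {x y : F}
    (hx : x ∈ (intBox r).image (intComb ω)) (hy : y ∈ (intBox r).image (intComb ω)) (hy0 : y ≠ 0)
    (hz : z = x * y⁻¹) : ∃ a ∈ ratioPoints ω z r, a ≠ 0 := by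
  obtain ⟨u, hu, rfl⟩ := Finset.mem_image.1 hx
  obtain ⟨v, hv, rfl⟩ := Finset.mem_image.1 hy
  refine ⟨(v, u), mem_ratioPoints.2 ⟨⟨hv, hu⟩, mem_ratioLattice.2 ?_⟩, ?_⟩
  · rw [hz, mul_comm, inv_mul_cancel_right₀ hy0]
  · rintro h
    exact hy0 (by rw [(Prod.mk.inj h).1, map_zero])

lemma linearIndependent_of_forall_dvd
    (h : ∀ c : ι → ℤ, ∑ i, (c i : F) * ω i = 0 → ∀ i, (p : ℤ) ∣ c i) :
    LinearIndependent (ZMod p) ω := by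
  rw [Fintype.linearIndependent_iff]
  intro g hg i
  obtain ⟨c, rfl⟩ : ∃ c : ι → ℤ, (fun i => (c i : ZMod p)) = g :=
    (ZMod.intCast_surjective.comp_left g)
  refine (ZMod.intCast_zmod_eq_zero_iff_dvd _ _).2 (h c ?_ i)
  simpa [Algebra.smul_def] using hg

lemma exists_basis_coe_eq
    (hindep : ∀ c : ι → ℤ, ∑ i, (c i : F) * ω i = 0 → ∀ i, (p : ℤ) ∣ c i)
    (hspan : ∀ x : F, ∃ c : ι → ℤ, x = ∑ i, (c i : F) * ω i) :
    ∃ b : Module.Basis ι (ZMod p) F, b = ω := by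
  refine ⟨.mk (linearIndependent_of_forall_dvd hindep) fun x _ => ?_, Module.Basis.coe_mk _ _⟩
  obtain ⟨c, rfl⟩ := hspan x
  refine Submodule.sum_mem _ fun i _ => ?_
  rw [← zsmul_eq_mul]
  exact zsmul_mem (Submodule.subset_span (Set.mem_range_self i)) _

lemma mem_range_algebraMap_iff_exists_intCast :
    z ∈ (algebraMap (ZMod p) F).range ↔ ∃ t : ℤ, z = t := by
  rw [RingHom.mem_range, ZMod.intCast_surjective.exists]
  simp only [map_intCast, eq_comm]

lemma image_Icc_prod_eq_image_intBox (ω : Fin 3 → F) (H : Fin 3 → ℕ) :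
    (Finset.Icc (-(H 0 : ℤ)) (H 0 : ℤ) ×ˢ Finset.Icc (-(H 1 : ℤ)) (H 1 : ℤ) ×ˢ
      Finset.Icc (-(H 2 : ℤ)) (H 2 : ℤ)).image
        (fun x => (x.1 : F) * ω 0 + (x.2.1 : F) * ω 1 + (x.2.2 : F) * ω 2) =
      (intBox fun i => (H i : ℝ)).image (intComb ω) := by
  have hbox : ∀ c : Fin 3 → ℤ, c ∈ intBox (fun i => (H i : ℝ)) ↔
      (c 0, c 1, c 2) ∈ Finset.Icc (-(H 0 : ℤ)) (H 0 : ℤ) ×ˢ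
        Finset.Icc (-(H 1 : ℤ)) (H 1 : ℤ) ×ˢ Finset.Icc (-(H 2 : ℤ)) (H 2 : ℤ) := fun c => by
    simp [intBox, Fintype.mem_piFinset, Fin.forall_fin_succ]
  ext x
  simp only [Finset.mem_image, hbox, Fintype.linearCombination_apply, Fin.sum_univ_three,
    zsmul_eq_mul]
  constructor
  · rintro ⟨⟨a, b, c⟩, habc, rfl⟩
    exact ⟨![a, b, c], habc, rfl⟩
  · rintro ⟨c, hc, rfl⟩
    exact ⟨_, hc, rfl⟩

end RatioLattice

/-- Lemma 1: the contribution `S₁` of the ratios `z ∈ Z \ F_p` satisfies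
`S₁ ≪ |B|² log p`. -/
theorem stmt_6 :
    ∃ C : ℝ, 0 < C ∧
      ∀ (p : ℕ), p.Prime → 3 ≤ p →
      ∀ (F : Type) [instField : Field F] [instFintype : Fintype F],
        Fintype.card F = p ^ 3 →
        ∀ (ω : Fin 3 → F),
          (∀ c : Fin 3 → ℤ, (∑ i, (c i : F) * ω i) = 0 → ∀ i, (p : ℤ) ∣ c i) →
          (∀ x : F, ∃ c : Fin 3 → ℤ, x = ∑ i, (c i : F) * ω i) →
        ∀ (H : Fin 3 → ℕ),
          (∀ i, 1 ≤ H i) →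
          H 0 ≤ H 1 → H 1 ≤ H 2 →
          (H 2 : ℝ) < Real.sqrt ((p : ℝ) / 2) →
          let B₀ : Finset F :=
            (Finset.Icc (-(H 0 : ℤ)) (H 0 : ℤ) ×ˢ
              Finset.Icc (-(H 1 : ℤ)) (H 1 : ℤ) ×ˢ
              Finset.Icc (-(H 2 : ℤ)) (H 2 : ℤ)).image
              (fun x => (x.1 : F) * ω 0 + (x.2.1 : F) * ω 1 + (x.2.2 : F) * ω 2)
          let f₀ : F → ℕ := fun z => ((B₀ ×ˢ B₀).filter (fun q => q.1 * z = q.2)).card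
          ((∑ z ∈ Finset.univ.filter (fun z : F =>
              (∃ x ∈ B₀, ∃ y ∈ B₀, x ≠ 0 ∧ y ≠ 0 ∧ z = x * y⁻¹) ∧
                ¬ ∃ t : ℤ, z = (t : F)), (f₀ z) ^ 2 : ℕ) : ℝ) ≤
            C * ((H 0 : ℝ) * (H 1 : ℝ) * (H 2 : ℝ)) ^ 2 * Real.log p := by
  refine ⟨8 * 10 ^ 22, by positivity, ?_⟩
  intro p hp hp3 F _ _ hF ω hindep hspan H hH hH01 hH12 hH2 B₀ f₀
  have : Fact p.Prime := ⟨hp⟩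
  have : CharP F p := charP_of_card_eq_prime_pow hF
  let : Algebra (ZMod p) F := ZMod.algebra F p
  obtain ⟨b, rfl⟩ := exists_basis_coe_eq hindep hspan
  have hH_le : ∀ i, H i ≤ H 2 := by
    simp only [Fin.forall_fin_succ]
    exact ⟨hH01.trans hH12, hH12, le_rfl, nofun⟩
  have hHp : ∀ i, 2 * (H i : ℝ) ^ 2 < p := fun i =>
    two_mul_sq_lt_of_lt_sqrt (Nat.cast_nonneg _) ((Nat.cast_le.2 (hH_le i)).trans_lt hH2)
  have hB₀ : B₀ = (intBox fun i => (H i : ℝ)).image (intComb b) :=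
    image_Icc_prod_eq_image_intBox b H
  rw [Nat.cast_sum]
  refine (Finset.sum_le_sum fun z _ => ?_).trans
    ((sum_sq_card_ratioPoints_le (b := b) rfl (fun i => mod_cast hH i) hHp ?_ hp3 ?_).trans_eq ?_)
  · simp only [f₀, hB₀, Nat.cast_pow]
    gcongr
    exact card_filter_mul_eq_le
  · exact fun z hz => mem_range_algebraMap_iff_exists_intCast.not.2 (Finset.mem_filter.1 hz).2.2
  · intro z hz
    obtain ⟨-, ⟨x, hx, y, hy, -, hy0, hz⟩, -⟩ := Finset.mem_filter.1 hz
    exact exists_ne_zero_mem_ratioPoints_of_eq_mul_inv (hB₀ ▸ hx) (hB₀ ▸ hy) hy0 hz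
  · rw [Fin.prod_univ_three]
    ring
end

section
/- There is an absolute constant C > 0 such that for every prime p ≥ 3, every basis {ω₁, ω₂, ω₃} of F_{p³} over F_p, and all integers 1 ≤ H₁ ≤ H₂ ≤ H₃ < √(p/2), one has S₂ := Σ_{z ∈ Z ∩ F_p} f₀(z)² ≤ C·(H₁H₂H₃)²·(log p)³, where F_p denotes the prime subfield of F_{p³}. -/
open scoped Classical

/-!
If `z ∈ Z` lies in the base field, multiplication by `z` acts separately on each coordinate of an
element of the box, so any nonzero coordinate exhibits `z = b / a` with coprime integers `a`, `b` of
absolute value at most `M`, the longest side. Since `2 * M ^ 2 < p`, a congruence `x * b ≡ a * y`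
modulo `p` between integers of that size is an equality, hence `a ∣ x` and `b ∣ y`. Applied to a
longest coordinate, this bounds `f₀ z` both by `2 |B| / |a|` and by `2 |B| / |b|`, so that
`f₀ z ^ 2 ≤ 4 |B| ^ 2 / |a * b|`, and summing over the distinct pairs `(a, b)` gives two harmonic
sums.
-/

open Finset

/-! ### Counting multiples -/

lemma card_filter_dvd_Ioc_mul_le {a b d : ℤ} (hab : a ≤ b) (hd : 0 < d) :
    (#{x ∈ Ioc a b | d ∣ x} : ℤ) * d ≤ b - a + d := by
  have hd' : (0 : ℚ) < d := by exact_mod_cast hd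
  rw [Int.Ioc_filter_dvd_card a b hd, max_mul_of_nonneg _ _ hd.le, zero_mul]
  refine max_le ?_ (by linarith)
  have hfloor : ((⌊b / (d : ℚ)⌋ - ⌊a / (d : ℚ)⌋ : ℤ) : ℚ) ≤ (b - a + d) / d := by
    push_cast
    calc (⌊b / (d : ℚ)⌋ - ⌊a / (d : ℚ)⌋ : ℚ) ≤ b / d - (a / d - 1) := by
          gcongr
          exacts [Int.floor_le _, (Int.sub_one_lt_floor _).le]
      _ = (b - a + d) / d := by field_simp; ring
  exact_mod_cast (le_div_iff₀ hd').mp hfloor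

lemma card_filter_dvd_Icc_neg_mul_abs_le {M : ℕ} {d : ℤ} (hd : d ≠ 0) (hdM : |d| ≤ M) :
    (#{x ∈ Icc (-M : ℤ) M | d ∣ x} : ℤ) * |d| ≤ 2 * (2 * M + 1) := by
  have hIcc : {x ∈ Icc (-M : ℤ) M | d ∣ x} = {x ∈ Ioc (-M - 1 : ℤ) M | |d| ∣ x} := by
    ext x
    simp only [mem_filter, mem_Icc, mem_Ioc, abs_dvd]
    lia
  have hmul := card_filter_dvd_Ioc_mul_le (a := -M - 1) (b := M) (by lia) (abs_pos.mpr hd)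
  rw [hIcc]
  linarith

lemma card_filter_piFinset_apply_mul_card {ι : Type*} [Fintype ι] {α : ι → Type*}
    (s : ∀ i, Finset (α i)) (j : ι) (P : α j → Prop) [DecidablePred P] :
    #{c ∈ Fintype.piFinset s | P (c j)} * #(s j) = (∏ i, #(s i)) * #{x ∈ s j | P x} := by
  have hupdate : ({c ∈ Fintype.piFinset s | P (c j)} : Finset (∀ i, α i)) =
      Fintype.piFinset (Function.update s j {x ∈ s j | P x}) := by
    rw [Fintype.piFinset_update_eq_filter_piFinset_mem s j (filter_subset _ _)]
    refine filter_congr fun c hc => ?_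
    simp only [mem_filter, Fintype.mem_piFinset.mp hc j, true_and]
  have hcard (i : ι) : #(Function.update s j {x ∈ s j | P x} i) =
      Function.update (fun k => #(s k)) j #{x ∈ s j | P x} i := by
    obtain rfl | hij := eq_or_ne i j <;> simp [*]
  rw [hupdate, Fintype.card_piFinset, prod_congr rfl fun i _ => hcard i,
    prod_update_of_mem (mem_univ j), ← mul_prod_erase univ _ (mem_univ j), erase_eq]
  ring

/-! ### Harmonic sums -/

lemma sum_Icc_neg_inv_abs_le (M : ℕ) :
    ∑ n ∈ Icc (-M : ℤ) M, |(n : ℝ)|⁻¹ ≤ 2 * (1 + Real.log M) := by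
  have heven : Function.Even fun n : ℤ => |(n : ℝ)|⁻¹ := fun n => by simp
  have hharmonic : ∑ n ∈ Icc (-M : ℤ) M, |(n : ℝ)|⁻¹ = 2 * (harmonic M : ℝ) := by
    rw [sum_Icc_of_even_eq_range heven, sum_range_succ', harmonic]
    simp [abs_of_nonneg, add_nonneg]
  rw [hharmonic]
  gcongr
  exact harmonic_le_one_add_log M

lemma sum_inv_abs_mul_inv_abs_le {α : Type*} {T : Finset α} {a b : α → ℤ} {M : ℕ}
    (ha : ∀ z ∈ T, |a z| ≤ M) (hb : ∀ z ∈ T, |b z| ≤ M)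
    (hinj : Set.InjOn (fun z => (a z, b z)) T) :
    ∑ z ∈ T, |(a z : ℝ)|⁻¹ * |(b z : ℝ)|⁻¹ ≤ (2 * (1 + Real.log M)) ^ 2 := by
  have hmaps : T.image (fun z => (a z, b z)) ⊆ Icc (-M : ℤ) M ×ˢ Icc (-M : ℤ) M :=
    image_subset_iff.mpr fun z hz => mem_product.mpr
      ⟨mem_Icc.mpr (abs_le.mp (ha z hz)), mem_Icc.mpr (abs_le.mp (hb z hz))⟩
  calc ∑ z ∈ T, |(a z : ℝ)|⁻¹ * |(b z : ℝ)|⁻¹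
      = ∑ q ∈ T.image fun z => (a z, b z), |(q.1 : ℝ)|⁻¹ * |(q.2 : ℝ)|⁻¹ := by
        rw [sum_image hinj]
    _ ≤ ∑ q ∈ Icc (-M : ℤ) M ×ˢ Icc (-M : ℤ) M, |(q.1 : ℝ)|⁻¹ * |(q.2 : ℝ)|⁻¹ :=
        sum_le_sum_of_subset_of_nonneg hmaps fun _ _ _ => by positivity
    _ = (∑ n ∈ Icc (-M : ℤ) M, |(n : ℝ)|⁻¹) ^ 2 := by rw [sq, sum_mul_sum, sum_product]
    _ ≤ (2 * (1 + Real.log M)) ^ 2 := by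
        gcongr
        exact sum_Icc_neg_inv_abs_le M

/-! ### Reduced ratios -/

/-- `z` is the quotient `b / a` in `F` of coprime integers of absolute value at most `M`. -/
structure IsReducedRatio {F : Type*} [Field F] (M : ℕ) (z : F) (a b : ℤ) : Prop where
  isCoprime : IsCoprime a b
  abs_left_le : |a| ≤ M
  abs_right_le : |b| ≤ M
  left_cast_ne_zero : (a : F) ≠ 0
  cast_mul : (a : F) * z = b

section Field

variable {F : Type*} [Field F] {M p : ℕ} {z : F} {a b : ℤ}

lemma exists_isReducedRatio (ha : |a| ≤ M) (hb : |b| ≤ M) (ha₀ : (a : F) ≠ 0)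
    (hz : (a : F) * z = b) : ∃ a' b' : ℤ, IsReducedRatio M z a' b' := by
  have ha₀' : a ≠ 0 := by rintro rfl; simp at ha₀
  obtain ⟨g, a', b', hg, hgcd, rfl, rfl⟩ :=
    Int.exists_gcd_one' (Int.gcd_pos_of_ne_zero_left b ha₀')
  have le_mul_abs (n : ℤ) : |n| ≤ |n * g| := by
    rw [abs_mul, Nat.abs_cast]
    exact le_mul_of_one_le_right (abs_nonneg n) (by exact_mod_cast hg)
  push_cast at ha₀ hz
  refine ⟨a', b', Int.isCoprime_iff_gcd_eq_one.mpr hgcd, (le_mul_abs a').trans ha,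
    (le_mul_abs b').trans hb, left_ne_zero_of_mul ha₀, ?_⟩
  exact mul_right_cancel₀ (right_ne_zero_of_mul ha₀) (by linear_combination hz)

namespace IsReducedRatio

lemma left_ne_zero (h : IsReducedRatio M z a b) : a ≠ 0 := by
  rintro rfl
  exact h.left_cast_ne_zero Int.cast_zero

lemma inv (h : IsReducedRatio M z a b) (hz : z ≠ 0) : IsReducedRatio M z⁻¹ b a where
  isCoprime := h.isCoprime.symm
  abs_left_le := h.abs_right_le
  abs_right_le := h.abs_left_le
  left_cast_ne_zero := h.cast_mul ▸ mul_ne_zero h.left_cast_ne_zero hz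
  cast_mul := by rw [← h.cast_mul, mul_inv_cancel_right₀ hz]

lemma left_dvd [CharP F p] (h : IsReducedRatio M z a b) (hp : 2 * M ^ 2 < p) {x y : ℤ}
    (hx : |x| ≤ M) (hy : |y| ≤ M) (hxy : (x : F) * z = y) : a ∣ x := by
  have hdvd : (p : ℤ) ∣ x * b - a * y := by
    rw [← CharP.intCast_eq_zero_iff F p]
    push_cast
    rw [← h.cast_mul, ← hxy]
    ring
  have hlt : |x * b - a * y| < p :=
    calc |x * b - a * y| ≤ |x| * |b| + |a| * |y| := by
          rw [← abs_mul, ← abs_mul]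
          exact abs_sub _ _
      _ ≤ M * M + M * M := by
          gcongr
          exacts [h.abs_right_le, h.abs_left_le]
      _ < p := by
          have : (2 * M ^ 2 : ℤ) < p := by exact_mod_cast hp
          linarith
  have heq : x * b - a * y = 0 := Int.eq_zero_of_abs_lt_dvd hdvd hlt
  exact h.isCoprime.dvd_of_dvd_mul_right ⟨y, by linarith⟩

lemma unique {z' : F} (h : IsReducedRatio M z a b) (h' : IsReducedRatio M z' a b) : z = z' :=
  mul_left_cancel₀ h.left_cast_ne_zero (h.cast_mul.trans h'.cast_mul.symm)

end IsReducedRatio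

/-! ### Ratios of elements of a box -/

/-- The set `Z` of the ratios `x * y⁻¹` of nonzero elements of `B`. -/
noncomputable def ratioFinset (B : Finset F) : Finset F :=
  ((B ×ˢ B).filter fun q => q.1 ≠ 0 ∧ q.2 ≠ 0).image fun q => q.1 * q.2⁻¹

/-- The number `f₀ z` of representations of `z` as a ratio of elements of `B`, that is, of pairs
`(x, y)` in `B × B` with `x * z = y`. -/
noncomputable def ratioCount (B : Finset F) (z : F) : ℕ :=
  #{q ∈ B ×ˢ B | q.1 * z = q.2}

lemma mem_ratioFinset {B : Finset F} :
    z ∈ ratioFinset B ↔ ∃ x ∈ B, ∃ y ∈ B, x ≠ 0 ∧ y ≠ 0 ∧ z = x * y⁻¹ := by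
  simp only [ratioFinset, mem_image, mem_filter, mem_product, Prod.exists]
  grind

lemma ne_zero_of_mem_ratioFinset {B : Finset F} (hz : z ∈ ratioFinset B) : z ≠ 0 := by
  obtain ⟨x, -, y, -, hx, hy, rfl⟩ := mem_ratioFinset.mp hz
  exact mul_ne_zero hx (inv_ne_zero hy)

lemma ratioCount_inv (B : Finset F) (hz : z ≠ 0) : ratioCount B z⁻¹ = ratioCount B z := by
  refine card_equiv (Equiv.prodComm F F) fun q => ?_
  simp only [mem_filter, mem_product, Equiv.prodComm_apply, Prod.fst_swap, Prod.snd_swap,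
    mul_inv_eq_iff_eq_mul₀ hz, eq_comm (a := q.1), and_comm (a := q.1 ∈ B)]

section Box

variable {ι : Type*} [Fintype ι]

/-- The integer vectors `c` with `|c i| ≤ H i` for all `i`. -/
noncomputable def coeffBox (H : ι → ℕ) : Finset (ι → ℤ) :=
  Fintype.piFinset fun i => Icc (-H i : ℤ) (H i)

/-- The box `B₀` of the combinations `∑ i, c i * ω i` with integers `|c i| ≤ H i`. -/
noncomputable def symmBox (ω : ι → F) (H : ι → ℕ) : Finset F :=
  (coeffBox H).image fun c => ∑ i, (c i : F) * ω i

variable {H : ι → ℕ} {ω : ι → F}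

lemma mem_coeffBox {c : ι → ℤ} : c ∈ coeffBox H ↔ ∀ i, |c i| ≤ H i := by
  simp only [coeffBox, Fintype.mem_piFinset, mem_Icc, abs_le]

lemma mem_symmBox {x : F} :
    x ∈ symmBox ω H ↔ ∃ c : ι → ℤ, (∀ i, |c i| ≤ H i) ∧ ∑ i, (c i : F) * ω i = x := by
  simp only [symmBox, mem_image, mem_coeffBox]

lemma symmBox_fin_three (ω : Fin 3 → F) (H : Fin 3 → ℕ) :
    symmBox ω H = (Icc (-(H 0 : ℤ)) (H 0 : ℤ) ×ˢ Icc (-(H 1 : ℤ)) (H 1 : ℤ) ×ˢ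
      Icc (-(H 2 : ℤ)) (H 2 : ℤ)).image
        (fun x => (x.1 : F) * ω 0 + (x.2.1 : F) * ω 1 + (x.2.2 : F) * ω 2) := by
  ext x
  simp [mem_symmBox, Fin.exists_fin_succ_pi, Fin.forall_fin_succ, Fin.sum_univ_three, abs_le]

lemma card_filter_dvd_coeffBox_mul_abs_le {j : ι} {d : ℤ} (hd : d ≠ 0) (hdH : |d| ≤ H j) :
    (#{c ∈ coeffBox H | d ∣ c j} : ℤ) * |d| ≤ 2 * ∏ i, (2 * H i + 1) := by
  have hside (i : ι) : #(Icc (-H i : ℤ) (H i)) = 2 * H i + 1 := by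
    rw [Int.card_Icc]
    lia
  have hcount := card_filter_piFinset_apply_mul_card (fun i => Icc (-H i : ℤ) (H i)) j (d ∣ ·)
  simp only [hside] at hcount
  have hdvd := card_filter_dvd_Icc_neg_mul_abs_le hd hdH
  refine le_of_mul_le_mul_right ?_ (by positivity : (0 : ℤ) < 2 * H j + 1)
  calc (#{c ∈ coeffBox H | d ∣ c j} : ℤ) * |d| * (2 * H j + 1)
      = (∏ i, (2 * H i + 1)) * (#{x ∈ Icc (-H j : ℤ) (H j) | d ∣ x} * |d|) := by
        zify at hcount
        unfold coeffBox
        push_cast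
        linear_combination |d| * hcount
    _ ≤ (∏ i, (2 * H i + 1)) * (2 * (2 * H j + 1)) := by gcongr
    _ = 2 * (∏ i, (2 * H i + 1)) * (2 * H j + 1) := by ring

variable {K : Type*} [Field K] [Algebra K F]

lemma cast_mul_eq_of_sum_mul_eq (hω : LinearIndependent K ω)
    (hz : z ∈ Set.range (algebraMap K F)) {c c' : ι → ℤ}
    (h : (∑ i, (c i : F) * ω i) * z = ∑ i, (c' i : F) * ω i) (i : ι) :
    (c i : F) * z = c' i := by
  obtain ⟨t, rfl⟩ := hz
  have hzero : ∑ i, ((c i : K) * t - c' i) • ω i = 0 := by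
    simp only [Algebra.smul_def, map_sub, map_mul, map_intCast, sub_mul, sum_sub_distrib, ← h,
      sum_mul]
    exact sub_eq_zero.mpr (sum_congr rfl fun i _ => by ring)
  have hi := Fintype.linearIndependent_iff.mp hω _ hzero i
  simpa using congrArg (algebraMap K F) (sub_eq_zero.mp hi)

lemma exists_isReducedRatio_of_mem_ratioFinset (hω : LinearIndependent K ω)
    (hM : ∀ i, H i ≤ M) (hz : z ∈ ratioFinset (symmBox ω H))
    (hzK : z ∈ Set.range (algebraMap K F)) : ∃ a b : ℤ, IsReducedRatio M z a b := by
  obtain ⟨x, hx, y, hy, -, hy₀, hzxy⟩ := mem_ratioFinset.mp hz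
  obtain ⟨c', hc', rfl⟩ := mem_symmBox.mp hx
  obtain ⟨c, hc, rfl⟩ := mem_symmBox.mp hy
  obtain ⟨i, -, hi⟩ := exists_ne_zero_of_sum_ne_zero hy₀
  have hyz : (∑ i, (c i : F) * ω i) * z = ∑ i, (c' i : F) * ω i := by
    rw [hzxy, mul_comm, inv_mul_cancel_right₀ hy₀]
  have hMi : (H i : ℤ) ≤ M := by exact_mod_cast hM i
  exact exists_isReducedRatio ((hc i).trans hMi) ((hc' i).trans hMi) (left_ne_zero_of_mul hi)
    (cast_mul_eq_of_sum_mul_eq hω hzK hyz i)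

lemma ratioCount_symmBox_le [CharP F p] (hω : LinearIndependent K ω) {j : ι}
    (hp : 2 * H j ^ 2 < p) (hzK : z ∈ Set.range (algebraMap K F))
    (h : IsReducedRatio (H j) z a b) :
    (ratioCount (symmBox ω H) z : ℝ) ≤ 2 * (∏ i, (2 * H i + 1) : ℕ) * |(a : ℝ)|⁻¹ := by
  let e : (ι → ℤ) → F := fun c => ∑ i, (c i : F) * ω i
  have hsubset : {q ∈ symmBox ω H ×ˢ symmBox ω H | q.1 * z = q.2} ⊆
      {c ∈ coeffBox H | a ∣ c j}.image fun c => (e c, e c * z) := by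
    rintro ⟨x, y⟩ hq
    obtain ⟨⟨hx, hy⟩, hxy⟩ := by simpa only [mem_filter, mem_product] using hq
    obtain ⟨c, hc, rfl⟩ := mem_symmBox.mp hx
    obtain ⟨c', hc', rfl⟩ := mem_symmBox.mp hy
    have hdvd : a ∣ c j := h.left_dvd hp (hc j) (hc' j) (cast_mul_eq_of_sum_mul_eq hω hzK hxy j)
    exact mem_image.mpr ⟨c, mem_filter.mpr ⟨mem_coeffBox.mpr hc, hdvd⟩, by rw [← hxy]⟩
  have hcard : ratioCount (symmBox ω H) z ≤ #{c ∈ coeffBox H | a ∣ c j} :=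
    (card_le_card hsubset).trans card_image_le
  have hbox := card_filter_dvd_coeffBox_mul_abs_le h.left_ne_zero h.abs_left_le
  rw [← div_eq_mul_inv, le_div_iff₀ (abs_pos.mpr (Int.cast_ne_zero.mpr h.left_ne_zero))]
  calc (ratioCount (symmBox ω H) z : ℝ) * |(a : ℝ)|
      ≤ #{c ∈ coeffBox H | a ∣ c j} * |(a : ℝ)| := by gcongr
    _ ≤ 2 * (∏ i, (2 * H i + 1) : ℕ) := by exact_mod_cast hbox

lemma sq_ratioCount_symmBox_le [CharP F p] (hω : LinearIndependent K ω) {j : ι}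
    (hp : 2 * H j ^ 2 < p) (hzK : z ∈ Set.range (algebraMap K F)) (hz : z ≠ 0)
    (h : IsReducedRatio (H j) z a b) :
    (ratioCount (symmBox ω H) z : ℝ) ^ 2 ≤
      4 * (∏ i, (2 * H i + 1) : ℕ) ^ 2 * (|(a : ℝ)|⁻¹ * |(b : ℝ)|⁻¹) := by
  have hleft := ratioCount_symmBox_le hω hp hzK h
  have hzK' : z⁻¹ ∈ Set.range (algebraMap K F) := by
    obtain ⟨t, rfl⟩ := hzK
    exact ⟨t⁻¹, map_inv₀ _ _⟩
  have hright := ratioCount_symmBox_le hω hp hzK' (h.inv hz)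
  rw [ratioCount_inv _ hz] at hright
  calc (ratioCount (symmBox ω H) z : ℝ) ^ 2
      ≤ (2 * (∏ i, (2 * H i + 1) : ℕ) * |(a : ℝ)|⁻¹) *
          (2 * (∏ i, (2 * H i + 1) : ℕ) * |(b : ℝ)|⁻¹) := by
        rw [sq]
        gcongr
    _ = _ := by ring

theorem stmt_7_general [CharP F p] (hω : LinearIndependent K ω) {j : ι}
    (hj : ∀ i, H i ≤ H j) (hp : 2 * H j ^ 2 < p) :
    ∑ z ∈ ratioFinset (symmBox ω H) with z ∈ Set.range (algebraMap K F),
        (ratioCount (symmBox ω H) z : ℝ) ^ 2 ≤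
      16 * (∏ i, (2 * H i + 1) : ℕ) ^ 2 * (1 + Real.log (H j)) ^ 2 := by
  set T := {z ∈ ratioFinset (symmBox ω H) | z ∈ Set.range (algebraMap K F)}
  have hT : ∀ z ∈ T, z ∈ ratioFinset (symmBox ω H) ∧ z ∈ Set.range (algebraMap K F) :=
    fun z hz => mem_filter.mp hz
  have hred : ∀ z ∈ T, ∃ a b : ℤ, IsReducedRatio (H j) z a b := fun z hz =>
    exists_isReducedRatio_of_mem_ratioFinset hω hj (hT z hz).1 (hT z hz).2
  choose! a b hab using hred
  have hinj : Set.InjOn (fun z => (a z, b z)) T := fun z hz w hw hzw => by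
    obtain ⟨ha, hb⟩ := Prod.mk.inj hzw
    exact (hab z hz).unique (ha ▸ hb ▸ hab w hw)
  calc ∑ z ∈ T, (ratioCount (symmBox ω H) z : ℝ) ^ 2
      ≤ ∑ z ∈ T, 4 * (∏ i, (2 * H i + 1) : ℕ) ^ 2 * (|(a z : ℝ)|⁻¹ * |(b z : ℝ)|⁻¹) :=
        sum_le_sum fun z hz => sq_ratioCount_symmBox_le hω hp (hT z hz).2
          (ne_zero_of_mem_ratioFinset (hT z hz).1) (hab z hz)
    _ = 4 * (∏ i, (2 * H i + 1) : ℕ) ^ 2 * ∑ z ∈ T, |(a z : ℝ)|⁻¹ * |(b z : ℝ)|⁻¹ := by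
        rw [mul_sum]
    _ ≤ 4 * (∏ i, (2 * H i + 1) : ℕ) ^ 2 * (2 * (1 + Real.log (H j))) ^ 2 := by
        gcongr
        exact sum_inv_abs_mul_inv_abs_le (fun z hz => (hab z hz).abs_left_le)
          (fun z hz => (hab z hz).abs_right_le) hinj
    _ = _ := by ring

end Box

end Field

/-! ### The prime field -/

lemma linearIndependent_zmod_of_dvd_of_sum_eq_zero {ι R : Type*} [Fintype ι] [Ring R] {n : ℕ}
    [Algebra (ZMod n) R] {ω : ι → R}
    (h : ∀ c : ι → ℤ, ∑ i, (c i : R) * ω i = 0 → ∀ i, (n : ℤ) ∣ c i) :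
    LinearIndependent (ZMod n) ω := by
  refine Fintype.linearIndependent_iff.mpr fun g hg i => ?_
  choose c hc using fun i => ZMod.intCast_surjective (g i)
  simp only [← hc, Algebra.smul_def, map_intCast] at hg
  rw [← hc i, ZMod.intCast_zmod_eq_zero_iff_dvd]
  exact h c hg i

lemma mem_range_algebraMap_zmod_iff {R : Type*} [Ring R] {n : ℕ} [Algebra (ZMod n) R] {z : R} :
    z ∈ Set.range (algebraMap (ZMod n) R) ↔ ∃ t : ℤ, z = t := by
  rw [Set.mem_range, ZMod.intCast_surjective.exists]
  simp only [map_intCast, eq_comm]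

lemma prod_two_mul_add_one_le {ι : Type*} [Fintype ι] {H : ι → ℕ} (hH : ∀ i, 1 ≤ H i) :
    ∏ i, (2 * H i + 1) ≤ 3 ^ Fintype.card ι * ∏ i, H i := by
  calc ∏ i, (2 * H i + 1) ≤ ∏ i, 3 * H i := prod_le_prod' fun i _ => by linarith [hH i]
    _ = 3 ^ Fintype.card ι * ∏ i, H i := by simp only [prod_mul_distrib, prod_const, card_univ]

lemma two_mul_sq_lt_of_lt_sqrt_s7 {M p : ℕ} (h : (M : ℝ) < √((p : ℝ) / 2)) : 2 * M ^ 2 < p := by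
  have hsq : (M : ℝ) ^ 2 < p / 2 := (Real.lt_sqrt (by positivity)).mp h
  exact_mod_cast (by linarith : 2 * (M : ℝ) ^ 2 < p)

lemma one_add_log_sq_le {M p : ℕ} (hM : 1 ≤ M) (hMp : M ≤ p) (hp : 3 ≤ p) :
    (1 + Real.log M) ^ 2 ≤ 4 * Real.log p ^ 3 := by
  have hlog_one : 1 ≤ Real.log p := by
    rw [Real.le_log_iff_exp_le (by positivity)]
    have : (3 : ℝ) ≤ p := by exact_mod_cast hp
    linarith [Real.exp_one_lt_d9]
  have hlog_le : Real.log M ≤ Real.log p := by gcongr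
  have : 0 ≤ Real.log M := Real.log_natCast_nonneg M
  calc (1 + Real.log M) ^ 2 ≤ (Real.log p + Real.log p) ^ 2 := by gcongr
    _ = 4 * Real.log p ^ 2 := by ring
    _ ≤ 4 * Real.log p ^ 3 := by gcongr; norm_num

/-- Lemma 2: the contribution `S₂` of the ratios `z ∈ Z ∩ F_p` satisfies
`S₂ ≪ |B|² (log p)³`. -/
theorem stmt_7 :
    ∃ C : ℝ, 0 < C ∧
      ∀ (p : ℕ), p.Prime → 3 ≤ p →
      ∀ (F : Type) [instField : Field F] [instFintype : Fintype F],
        Fintype.card F = p ^ 3 →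
        ∀ (ω : Fin 3 → F),
          (∀ c : Fin 3 → ℤ, (∑ i, (c i : F) * ω i) = 0 → ∀ i, (p : ℤ) ∣ c i) →
          (∀ x : F, ∃ c : Fin 3 → ℤ, x = ∑ i, (c i : F) * ω i) →
        ∀ (H : Fin 3 → ℕ),
          (∀ i, 1 ≤ H i) →
          H 0 ≤ H 1 → H 1 ≤ H 2 →
          (H 2 : ℝ) < Real.sqrt ((p : ℝ) / 2) →
          let B₀ : Finset F :=
            (Finset.Icc (-(H 0 : ℤ)) (H 0 : ℤ) ×ˢ
              Finset.Icc (-(H 1 : ℤ)) (H 1 : ℤ) ×ˢ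
              Finset.Icc (-(H 2 : ℤ)) (H 2 : ℤ)).image
              (fun x => (x.1 : F) * ω 0 + (x.2.1 : F) * ω 1 + (x.2.2 : F) * ω 2)
          let f₀ : F → ℕ := fun z => ((B₀ ×ˢ B₀).filter (fun q => q.1 * z = q.2)).card
          ((∑ z ∈ Finset.univ.filter (fun z : F =>
              (∃ x ∈ B₀, ∃ y ∈ B₀, x ≠ 0 ∧ y ≠ 0 ∧ z = x * y⁻¹) ∧
                ∃ t : ℤ, z = (t : F)), (f₀ z) ^ 2 : ℕ) : ℝ) ≤
            C * ((H 0 : ℝ) * (H 1 : ℝ) * (H 2 : ℝ)) ^ 2 * Real.log p ^ 3 := by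
  refine ⟨16 * 27 ^ 2 * 4, by norm_num, fun p hp hp₃ F _ _ hcard ω hω _ H hH h₀₁ h₁₂ hHp => ?_⟩
  have : Fact p.Prime := ⟨hp⟩
  have : CharP F p := charP_of_card_eq_prime_pow hcard
  let : Algebra (ZMod p) F := ZMod.algebra F p
  have hmax : ∀ i, H i ≤ H 2 := by simp [Fin.forall_fin_succ, h₀₁.trans h₁₂, h₁₂]
  have hsq : 2 * H 2 ^ 2 < p := two_mul_sq_lt_of_lt_sqrt_s7 hHp
  have hbound := stmt_7_general (linearIndependent_zmod_of_dvd_of_sum_eq_zero hω) hmax hsq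
  have hprod := prod_two_mul_add_one_le hH
  have hlog := one_add_log_sq_le (hH 2) (by nlinarith [hH 2] : H 2 ≤ p) hp₃
  rw [symmBox_fin_three] at hbound
  rw [Fintype.card_fin, Fin.prod_univ_three H] at hprod
  intro B₀ f₀
  push_cast
  calc _ = _ := by
        refine sum_congr (ext fun z => ?_) fun _ _ => rfl
        simp only [mem_filter, mem_univ, true_and, mem_ratioFinset, mem_range_algebraMap_zmod_iff,
          B₀]
    _ ≤ 16 * (∏ i, (2 * H i + 1) : ℕ) ^ 2 * (1 + Real.log (H 2)) ^ 2 := hbound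
    _ ≤ 16 * (3 ^ 3 * (H 0 * H 1 * H 2) : ℕ) ^ 2 * (4 * Real.log p ^ 3) := by gcongr
    _ = _ := by push_cast; ring
end

section
/- Let p be a prime, {ω₁, ω₂, ω₃} a basis of F_{p³} over F_p, and B a box with 1 ≤ Hᵢ ≤ p for i = 1, 2, 3. Then for every z ∈ F_{p³}, the number f(z) of pairs (x, y) ∈ B × B with x·z = y is at most the number f₀(z) of pairs (x, y) ∈ B₀ × B₀ with x·z = y. -/
open scoped Classical

/-! Multiplication by `z` is additive and `B - B ⊆ B₀`, so the difference of two solutions in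
`B × B` is a solution in `B₀ × B₀`. Subtracting one fixed solution is injective, so `B × B` has no
more solutions than `B₀ × B₀`. -/

section

open Finset
open scoped Pointwise

theorem card_filter_mem_le_of_sub_subset {G : Type*} [AddGroup G] [DecidableEq G]
    (K : AddSubgroup G) {s t : Finset G} (h : s - s ⊆ t) : #{g ∈ s | g ∈ K} ≤ #{g ∈ t | g ∈ K} := by
  refine card_le_card_sub_self.trans (card_le_card (sub_subset_iff.mpr fun g hg g' hg' => ?_))
  rw [mem_filter] at hg hg' ⊢
  exact ⟨h (sub_mem_sub hg.1 hg'.1), K.sub_mem hg.2 hg'.2⟩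

theorem card_filter_map_eq_le_of_sub_subset {G G' : Type*} [AddGroup G] [AddGroup G']
    (f : G →+ G') {s s₀ : Finset G} {t t₀ : Finset G'} (hs : s - s ⊆ s₀) (ht : t - t ⊆ t₀) :
    #{q ∈ s ×ˢ t | f q.1 = q.2} ≤ #{q ∈ s₀ ×ˢ t₀ | f q.1 = q.2} := by
  have hst : s ×ˢ t - s ×ˢ t ⊆ s₀ ×ˢ t₀ := sub_subset_iff.mpr fun q hq q' hq' => by
    rw [mem_product] at hq hq' ⊢
    exact ⟨hs (sub_mem_sub hq.1 hq'.1), ht (sub_mem_sub hq.2 hq'.2)⟩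
  exact card_filter_mem_le_of_sub_subset f.graph hst

variable {ι G : Type*} [Fintype ι] [AddCommGroup G]

/-- The box of all integer combinations `∑ i, x i • ω i` with `a i ≤ x i ≤ b i`, the common form of
`B` and `B₀`. It is a set of elements of `G`, so coefficient vectors with the same combination are
counted once. -/
noncomputable def latticeBox (ω : ι → G) (a b : ι → ℤ) : Finset G :=
  (Icc a b).image fun x => ∑ i, x i • ω i

namespace latticeBox

theorem mono (ω : ι → G) {a b a' b' : ι → ℤ} (ha : a' ≤ a) (hb : b ≤ b') :
    latticeBox ω a b ⊆ latticeBox ω a' b' :=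
  image_subset_image (Icc_subset_Icc ha hb)

theorem sub_subset (ω : ι → G) (a b c d : ι → ℤ) :
    latticeBox ω a b - latticeBox ω c d ⊆ latticeBox ω (a - d) (b - c) := by
  simp only [latticeBox, sub_subset_iff, mem_image, mem_Icc]
  rintro _ ⟨x, ⟨hax, hxb⟩, rfl⟩ _ ⟨y, ⟨hcy, hyd⟩, rfl⟩
  exact ⟨x - y, ⟨sub_le_sub hax hyd, sub_le_sub hxb hcy⟩, by
    simp only [Pi.sub_apply, sub_smul, sum_sub_distrib]⟩

theorem eq_image_of_fin_three {R : Type*} [NonAssocRing R] (ω : Fin 3 → R) (a b : Fin 3 → ℤ) :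
    latticeBox ω a b = (Icc (a 0) (b 0) ×ˢ Icc (a 1) (b 1) ×ˢ Icc (a 2) (b 2)).image
      fun x => (x.1 : R) * ω 0 + (x.2.1 : R) * ω 1 + (x.2.2 : R) * ω 2 := by
  ext g
  simp only [latticeBox, mem_image, mem_product, mem_Icc, Pi.le_def, Fin.forall_fin_succ,
    Fin.sum_univ_three, zsmul_eq_mul, Prod.exists]
  constructor
  · rintro ⟨x, ⟨⟨ha₀, ha₁, ha₂, -⟩, hb₀, hb₁, hb₂, -⟩, rfl⟩
    exact ⟨x 0, x 1, x 2, ⟨⟨ha₀, hb₀⟩, ⟨ha₁, hb₁⟩, ha₂, hb₂⟩, rfl⟩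
  · rintro ⟨u, v, w, ⟨⟨hau, hub⟩, ⟨hav, hvb⟩, haw, hwb⟩, rfl⟩
    exact ⟨![u, v, w], ⟨⟨hau, hav, haw, nofun⟩, hub, hvb, hwb, nofun⟩, rfl⟩

end latticeBox

theorem stmt_9_general (f : G →+ G) (ω : ι → G) (N H : ι → ℤ) :
    let B := latticeBox ω (N + 1) (N + H)
    let B₀ := latticeBox ω (-H) H
    ((B ×ˢ B).filter fun q => f q.1 = q.2).card ≤
      ((B₀ ×ˢ B₀).filter fun q => f q.1 = q.2).card := by
  intro B B₀
  have hlower : -H ≤ N + 1 - (N + H) := by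
    rw [add_sub_add_left_eq_sub, sub_eq_neg_add]
    exact le_add_of_nonneg_right zero_le_one
  have hupper : N + H - (N + 1) ≤ H := by
    rw [add_sub_add_left_eq_sub]
    exact sub_le_self H zero_le_one
  have hB : B - B ⊆ B₀ :=
    (latticeBox.sub_subset ω _ _ _ _).trans (latticeBox.mono ω hlower hupper)
  exact card_filter_map_eq_le_of_sub_subset f hB hB

end

/-- For every `z`, the number of solutions of `x·z = y` with `x, y ∈ B` is at most
the number of solutions with `x, y ∈ B₀`. -/
theorem stmt_9 (p : ℕ) (hp : p.Prime)
    (F : Type) [instField : Field F] [instFintype : Fintype F]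
    (hcard : Fintype.card F = p ^ 3)
    (ω : Fin 3 → F)
    (hli : ∀ c : Fin 3 → ℤ, (∑ i, (c i : F) * ω i) = 0 → ∀ i, (p : ℤ) ∣ c i)
    (hspan : ∀ x : F, ∃ c : Fin 3 → ℤ, x = ∑ i, (c i : F) * ω i)
    (N : Fin 3 → ℤ) (H : Fin 3 → ℕ)
    (hH : ∀ i, 1 ≤ H i ∧ H i ≤ p)
    (z : F) :
    let B : Finset F :=
      (Finset.Icc (N 0 + 1) (N 0 + (H 0 : ℤ)) ×ˢ
        Finset.Icc (N 1 + 1) (N 1 + (H 1 : ℤ)) ×ˢ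
        Finset.Icc (N 2 + 1) (N 2 + (H 2 : ℤ))).image
        (fun x => (x.1 : F) * ω 0 + (x.2.1 : F) * ω 1 + (x.2.2 : F) * ω 2)
    let B₀ : Finset F :=
      (Finset.Icc (-(H 0 : ℤ)) (H 0 : ℤ) ×ˢ
        Finset.Icc (-(H 1 : ℤ)) (H 1 : ℤ) ×ˢ
        Finset.Icc (-(H 2 : ℤ)) (H 2 : ℤ)).image
        (fun x => (x.1 : F) * ω 0 + (x.2.1 : F) * ω 1 + (x.2.2 : F) * ω 2)
    ((B ×ˢ B).filter (fun q => q.1 * z = q.2)).card ≤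
      ((B₀ ×ˢ B₀).filter (fun q => q.1 * z = q.2)).card := by
  simpa only [latticeBox.eq_image_of_fin_three, Pi.add_apply, Pi.one_apply, Pi.neg_apply,
    AddMonoidHom.mulRight_apply] using stmt_9_general (AddMonoidHom.mulRight z) ω N fun i => H i
end

section
/- Let p be a prime, {ω₁, ω₂, ω₃} a basis of F_{p³} over F_p, and let H₁, H₂, H₃ be integers with 1 ≤ H₁ ≤ H₂ ≤ H₃ < √(p/2). Let z ∈ F_{p³} \ F_p. If (x₁, x₂, x₃, y₁, y₂, y₃) ∈ ℤ⁶ satisfies z·(x₁ω₁ + x₂ω₂ + x₃ω₃) = y₁ω₁ + y₂ω₂ + y₃ω₃ and |xᵢ| < Hᵢ/H₂ and |yᵢ| < Hᵢ/H₂ for i = 1, 2, 3, then x₁ = x₂ = x₃ = y₁ = y₂ = y₃ = 0. (Equivalently, the first successive minimum of the box D = {|xᵢ|, |yᵢ| ≤ Hᵢ} with respect to the lattice Γ_z is at least H₂⁻¹.) -/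
open scoped Classical

/-!
Scaled by `H₂⁻¹`, the box has half-width at most `1` in every coordinate but the third, so an
integer point in its interior has only `x₃` and `y₃` left. Cancelling `ω₃ ≠ 0` gives `z * x₃ = y₃`,
and since `z ∉ F_p` this forces `x₃` and `y₃` to vanish modulo `p`. They vanish as integers because
the third half-width is less than `p`.
-/

theorem eq_zero_of_mul_algebraMap_eq_algebraMap {K A : Type*} [Field K] [Ring A] [Nontrivial A]
    [Algebra K A] {z : A} (hz : z ∉ Set.range (algebraMap K A)) {a b : K}
    (h : z * algebraMap K A a = algebraMap K A b) : a = 0 ∧ b = 0 := by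
  have ha : a = 0 := by
    by_contra ha
    refine hz ⟨b * a⁻¹, ?_⟩
    rw [map_mul, ← h, mul_assoc, ← map_mul, mul_inv_cancel₀ ha, map_one, mul_one]
  refine ⟨ha, (algebraMap K A).injective ?_⟩
  rw [← h, ha, map_zero, mul_zero]

theorem dvd_of_mul_intCast_eq_intCast {p : ℕ} [Fact p.Prime] {A : Type*} [Ring A] [CharP A p]
    {z : A} (hz : ¬ ∃ t : ℤ, z = t) {a b : ℤ} (h : z * a = b) : (p : ℤ) ∣ a ∧ (p : ℤ) ∣ b := by
  let _ : Algebra (ZMod p) A := ZMod.algebra A p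
  have : Nontrivial A := CharP.nontrivial_of_char_ne_one (Fact.out : p.Prime).ne_one
  have hz' : z ∉ Set.range (algebraMap (ZMod p) A) := by
    rintro ⟨c, rfl⟩
    obtain ⟨t, rfl⟩ := ZMod.intCast_surjective c
    exact hz ⟨t, map_intCast _ t⟩
  simpa only [ZMod.intCast_zmod_eq_zero_iff_dvd] using
    eq_zero_of_mul_algebraMap_eq_algebraMap hz' (a := (a : ZMod p)) (b := (b : ZMod p))
      (by simpa only [map_intCast] using h)

theorem eq_zero_of_dvd_of_abs_lt_div {n : ℕ} {a : ℤ} {s r : ℝ} (hr : 0 < r) (hs : s ≤ n * r)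
    (hdvd : (n : ℤ) ∣ a) (ha : |(a : ℝ)| < s / r) : a = 0 := by
  have ha' : |(a : ℝ)| < n := ha.trans_le ((div_le_iff₀ hr).2 hs)
  exact Int.eq_zero_of_abs_lt_dvd hdvd (by exact_mod_cast ha')

theorem ne_zero_of_forall_sum_intCast_mul_eq_zero_dvd {ι A : Type*} [Fintype ι] [Ring A] {n : ℕ}
    (hn : n ≠ 1) {ω : ι → A} (hω : ∀ c : ι → ℤ, ∑ i, (c i : A) * ω i = 0 → ∀ i, (n : ℤ) ∣ c i)
    (k : ι) : ω k ≠ 0 := by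
  intro hk
  have hdvd : (n : ℤ) ∣ Pi.single (M := fun _ => ℤ) k 1 k := by
    refine hω _ ?_ k
    rw [Fintype.sum_eq_single k fun i hi => by simp [hi], hk, mul_zero]
  rw [Pi.single_eq_same] at hdvd
  exact hn (Nat.dvd_one.1 (by exact_mod_cast hdvd))

theorem sqrt_half_le_self {t : ℝ} (ht : 1 / 2 ≤ t) : √(t / 2) ≤ t := by
  rw [Real.sqrt_le_left (by linarith)]
  nlinarith

theorem stmt_11_general {p : ℕ} [Fact p.Prime] {A : Type*} [Ring A] [NoZeroDivisors A] [CharP A p]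
    {ι : Type*} [Fintype ι] {ω : ι → A} {k : ι} (hω : ω k ≠ 0) {H : ι → ℝ} {r : ℝ} (hr : 0 < r)
    (hH : ∀ i ≠ k, H i ≤ r) (hHk : H k ≤ p * r) {z : A} (hz : ¬ ∃ t : ℤ, z = t) {x y : ι → ℤ}
    (hmem : z * ∑ i, (x i : A) * ω i = ∑ i, (y i : A) * ω i)
    (hx : ∀ i, |(x i : ℝ)| < H i / r) (hy : ∀ i, |(y i : ℝ)| < H i / r) :
    (∀ i, x i = 0) ∧ ∀ i, y i = 0 := by
  have eq_zero_of_ne {w : ι → ℤ} (hw : ∀ i, |(w i : ℝ)| < H i / r) (i : ι) (hi : i ≠ k) :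
      w i = 0 :=
    eq_zero_of_dvd_of_abs_lt_div (n := 1) hr (by simpa using hH i hi) (by simp) (hw i)
  have sum_eq {w : ι → ℤ} (hw : ∀ i, |(w i : ℝ)| < H i / r) :
      ∑ i, (w i : A) * ω i = w k * ω k :=
    Fintype.sum_eq_single k fun i hi => by rw [eq_zero_of_ne hw i hi, Int.cast_zero, zero_mul]
  have hk : z * x k = y k := by
    rw [sum_eq hx, sum_eq hy, ← mul_assoc] at hmem
    exact mul_right_cancel₀ hω hmem
  obtain ⟨hxk, hyk⟩ := dvd_of_mul_intCast_eq_intCast (p := p) hz hk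
  have eq_zero {w : ι → ℤ} (hw : ∀ i, |(w i : ℝ)| < H i / r) (hwk : (p : ℤ) ∣ w k) (i : ι) :
      w i = 0 := by
    obtain rfl | hi := eq_or_ne i k
    · exact eq_zero_of_dvd_of_abs_lt_div hr hHk hwk (hw i)
    · exact eq_zero_of_ne hw i hi
  exact ⟨eq_zero hx hxk, eq_zero hy hyk⟩

/-- Lower bound for the first successive minimum: for `z ∉ F_p`, the lattice `Γ_z`
contains no nonzero point of the box scaled by `H₂⁻¹`. -/
theorem stmt_11 (p : ℕ) (hp : p.Prime)
    (F : Type) [instField : Field F] [instFintype : Fintype F]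
    (hcard : Fintype.card F = p ^ 3)
    (ω : Fin 3 → F)
    (hli : ∀ c : Fin 3 → ℤ, (∑ i, (c i : F) * ω i) = 0 → ∀ i, (p : ℤ) ∣ c i)
    (hspan : ∀ x : F, ∃ c : Fin 3 → ℤ, x = ∑ i, (c i : F) * ω i)
    (H : Fin 3 → ℕ)
    (hH1 : ∀ i, 1 ≤ H i)
    (hH01 : H 0 ≤ H 1) (hH12 : H 1 ≤ H 2)
    (hHlt : (H 2 : ℝ) < Real.sqrt ((p : ℝ) / 2))
    (z : F) (hz : ¬ ∃ t : ℤ, z = (t : F))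
    (x y : Fin 3 → ℤ)
    (hmem : z * (∑ i, (x i : F) * ω i) = ∑ i, (y i : F) * ω i)
    (hx : ∀ i, |(x i : ℝ)| < (H i : ℝ) / (H 1 : ℝ))
    (hy : ∀ i, |(y i : ℝ)| < (H i : ℝ) / (H 1 : ℝ)) :
    (∀ i, x i = 0) ∧ (∀ i, y i = 0) := by
  have : Fact p.Prime := ⟨hp⟩
  have : CharP F p := charP_of_card_eq_prime_pow hcard
  have hr : (1 : ℝ) ≤ H 1 := by exact_mod_cast hH1 1
  have hH : ∀ i ≠ 2, (H i : ℝ) ≤ H 1 := by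
    intro i hi
    fin_cases i
    · exact_mod_cast hH01
    · exact le_rfl
    · exact absurd rfl hi
  have hH2 : (H 2 : ℝ) ≤ p * H 1 := by
    have hp1 : (1 : ℝ) ≤ p := by exact_mod_cast hp.one_le
    calc (H 2 : ℝ) ≤ √(p / 2) := hHlt.le
      _ ≤ p := sqrt_half_le_self (by linarith)
      _ ≤ p * H 1 := le_mul_of_one_le_right (by positivity) hr
  have hω : ω 2 ≠ 0 := ne_zero_of_forall_sum_intCast_mul_eq_zero_dvd hp.ne_one hli 2
  exact stmt_11_general hω (by linarith) hH hH2 hz hmem hx hy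
end

section
/- Let p be a prime, {ω₁, ω₂, ω₃} a basis of F_{p³} over F_p, and let H₁, H₂, H₃ be integers with 1 ≤ H₁ ≤ H₂ ≤ H₃ < √(p/2). Let z ∈ F_{p³} \ F_p. If u = (u₁, ..., u₆) and v = (v₁, ..., v₆) are vectors of Γ_z whose coordinates satisfy |u₁|, |v₁|, |u₄|, |v₄| < H₁/H₁, |u₂|, |v₂|, |u₅|, |v₅| < H₂/H₁ and |u₃|, |v₃|, |u₆|, |v₆| < H₃/H₁, then u and v are linearly dependent over ℚ (i.e. there exist integers (a, b) ≠ (0, 0) with a·u + b·v = 0). (Equivalently, the second successive minimum of the box D = {|xᵢ|, |yᵢ| ≤ Hᵢ} with respect to Γ_z is at least H₁⁻¹.) -/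
open scoped Classical

/-!
Coordinates smaller than `H₁ / H₁ = 1` vanish, so the field elements `x` and `z * x` attached to a
vector of `Γ_z` in the scaled box both lie in the plane `W` spanned by `ω₂` and `ω₃`. If the
elements attached to `u` and `v` were independent over `F_p`, they would span `W`, so `W` would be
stable under multiplication by `z`; by Cayley–Hamilton `z` would then be a root of a monic
quadratic, which is impossible for an element of degree `3`. Hence `u` and `v` are dependent
modulo `p`, so `p` divides all their `2 × 2` minors. The coordinates are smaller than `√(p/2)`, so
the minors are smaller than `p` in absolute value and therefore vanish over `ℤ`.
-/

open Module Polynomial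

section InvariantSubmodule

variable {R A : Type*} [CommRing R] [Ring A] [Algebra R A]

lemma coe_aeval_restrict_mulLeft {z : A} {W : Submodule R A}
    (hW : ∀ w ∈ W, LinearMap.mulLeft R z w ∈ W) (P : R[X]) (w : W) :
    (aeval ((LinearMap.mulLeft R z).restrict hW) P w : A) = aeval z P * w := by
  induction P using Polynomial.induction_on' generalizing w with
  | add P Q hP hQ => simp [hP, hQ, add_mul]
  | monomial n r =>
    induction n generalizing w with
    | zero => simp [Algebra.smul_def]
    | succ n ih =>
      rw [aeval_monomial, pow_succ, ← mul_assoc, ← aeval_monomial, Module.End.mul_apply, ih,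
        aeval_monomial, aeval_monomial, pow_succ]
      simp [mul_assoc]

lemma exists_monic_natDegree_eq_finrank_and_aeval_eq_zero [IsDomain A] {z : A}
    {W : Submodule R A} [Module.Free R W] [Module.Finite R W] (hW₀ : W ≠ ⊥)
    (hW : ∀ w ∈ W, z * w ∈ W) :
    ∃ P : R[X], P.Monic ∧ P.natDegree = finrank R W ∧ aeval z P = 0 := by
  have := Module.nontrivial R A
  set f := (LinearMap.mulLeft R z).restrict hW
  obtain ⟨w, hwW, hw⟩ := W.exists_mem_ne_zero_of_ne_bot hW₀
  refine ⟨f.charpoly, f.charpoly_monic, f.charpoly_natDegree, ?_⟩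
  have h : aeval z f.charpoly * w = 0 := by
    rw [← coe_aeval_restrict_mulLeft hW _ ⟨w, hwW⟩, f.aeval_self_charpoly]
    rfl
  exact (mul_eq_zero.mp h).resolve_right hw

end InvariantSubmodule

lemma not_linearIndependent_of_mul_mem {K A ι : Type*} [Field K] [Ring A] [IsDomain A]
    [Algebra K A] [Fintype ι] [Nonempty ι] {z : A} {W : Submodule K A} [FiniteDimensional K W]
    (hWι : finrank K W ≤ Fintype.card ι)
    (hz : ∀ P : K[X], P.Monic → P.natDegree = Fintype.card ι → aeval z P ≠ 0)
    {x : ι → A} (hx : ∀ i, x i ∈ W) (hzx : ∀ i, z * x i ∈ W) : ¬ LinearIndependent K x := by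
  intro hli
  have hcard := finrank_span_eq_card hli
  have hspan : Submodule.span K (Set.range x) = W :=
    Submodule.eq_of_le_of_finrank_le (Submodule.span_le.mpr (Set.range_subset_iff.mpr hx))
      (hWι.trans hcard.ge)
  have hWz : ∀ w ∈ W, z * w ∈ W := by
    suffices W ≤ W.comap (LinearMap.mulLeft K z) from this
    conv_lhs => rw [← hspan]
    exact Submodule.span_le.mpr (Set.range_subset_iff.mpr hzx)
  have hW₀ : W ≠ ⊥ := by
    rintro rfl
    exact hli.ne_zero (Classical.arbitrary ι) (by simpa using hx _)
  obtain ⟨P, hP, hdeg, hPz⟩ := exists_monic_natDegree_eq_finrank_and_aeval_eq_zero hW₀ hWz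
  exact hz P hP (by rw [hdeg, ← hspan, hcard]) hPz

section MulGraph

variable {R A ι : Type*} [CommRing R] [Ring A] [Algebra R A] [Fintype ι]

variable (R) in
/-- The lattice `Γ_z` of coefficient vectors `(x, y)` with `z * ∑ xᵢ ωᵢ = ∑ yᵢ ωᵢ`, that is, the
graph of multiplication by `z` in the coordinates given by `ω`. A vector is encoded as
`u : ι ⊕ ι → R` with `x = u ∘ Sum.inl` and `y = u ∘ Sum.inr`, and the ring `R` of coefficients is a
parameter so that `Γ_z` over `ℤ` can be reduced to its analogue over `ZMod p`. -/
def mulGraph (ω : ι → A) (z : A) : Submodule R (ι ⊕ ι → R) :=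
  LinearMap.eqLocus
    (LinearMap.mulLeft R z ∘ₗ Fintype.linearCombination R ω ∘ₗ LinearMap.funLeft R R Sum.inl)
    (Fintype.linearCombination R ω ∘ₗ LinearMap.funLeft R R Sum.inr)

variable {ω : ι → A} {z : A}

lemma mem_mulGraph {u : ι ⊕ ι → R} :
    u ∈ mulGraph R ω z ↔ z * ∑ i, u (.inl i) • ω i = ∑ i, u (.inr i) • ω i :=
  Iff.rfl

lemma algebraMap_comp_mem_mulGraph {S : Type*} [CommRing S] [Algebra S A] [Algebra R S]
    [IsScalarTower R S A] {u : ι ⊕ ι → R} (hu : u ∈ mulGraph R ω z) :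
    algebraMap R S ∘ u ∈ mulGraph S ω z := by
  simpa only [mem_mulGraph, Function.comp_apply, algebraMap_smul] using hu

lemma injOn_linearCombination_mulGraph (hω : LinearIndependent R ω) :
    Set.InjOn (Fintype.linearCombination R ω ∘ₗ LinearMap.funLeft R R Sum.inl)
      (mulGraph R ω z : Set (ι ⊕ ι → R)) := by
  intro u hu v hv (huv : ∑ i, u (.inl i) • ω i = ∑ i, v (.inl i) • ω i)
  have hinj := hω.fintypeLinearCombination_injective
  have hinr : ∑ i, u (.inr i) • ω i = ∑ i, v (.inr i) • ω i := by
    rw [← mem_mulGraph.mp hu, ← mem_mulGraph.mp hv, huv]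
  funext k
  rcases k with i | i
  · exact congr_fun (hinj huv) i
  · exact congr_fun (hinj hinr) i

end MulGraph

lemma not_linearIndependent_of_mem_mulGraph {K A ι κ : Type*} [Field K] [Ring A] [IsDomain A]
    [Algebra K A] [Fintype ι] [Fintype κ] [Nonempty κ] {ω : ι → A} (hω : LinearIndependent K ω)
    {z : A} (hcard : Fintype.card ι = Fintype.card κ + 1)
    (hz : ∀ P : K[X], P.Monic → P.natDegree = Fintype.card κ → aeval z P ≠ 0)
    {u : κ → ι ⊕ ι → K} (hu : ∀ k, u k ∈ mulGraph K ω z) {i₀ : ι}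
    (hinl : ∀ k, u k (.inl i₀) = 0) (hinr : ∀ k, u k (.inr i₀) = 0) :
    ¬ LinearIndependent K u := by
  intro hli
  set W := Submodule.span K (Set.range fun i : {i // i ≠ i₀} ↦ ω i)
  have : FiniteDimensional K W := .span_of_finite K (Set.finite_range _)
  have hW : finrank K W ≤ Fintype.card κ :=
    (finrank_range_le_card _).trans (by simp [Fintype.card_subtype_compl, hcard])
  have sum_mem {c : ι → K} (hc : c i₀ = 0) : ∑ i, c i • ω i ∈ W := by
    refine W.sum_mem fun i _ ↦ ?_
    by_cases hi : i = i₀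
    · simp [hi, hc]
    · exact W.smul_mem _ (Submodule.subset_span ⟨⟨i, hi⟩, rfl⟩)
  have hspan : Submodule.span K (Set.range u) ≤ mulGraph K ω z :=
    Submodule.span_le.mpr (Set.range_subset_iff.mpr hu)
  refine not_linearIndependent_of_mul_mem hW hz (fun k ↦ sum_mem (hinl k)) (fun k ↦ ?_)
    (hli.map_injOn _ ((injOn_linearCombination_mulGraph hω).mono hspan))
  exact mem_mulGraph.mp (hu k) ▸ sum_mem (hinr k)

lemma not_linearIndependent_pair_iff_forall_mul_eq_mul {R κ : Type*} [CommRing R] [IsDomain R]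
    {u v : κ → R} : ¬ LinearIndependent R ![u, v] ↔ ∀ i j, u i * v j = u j * v i := by
  rw [LinearIndependent.pair_iff]
  push Not
  refine ⟨fun ⟨s, t, hst, hne⟩ i j ↦ ?_, fun h ↦ ?_⟩
  · have hrel (k : κ) : s * u k + t * v k = 0 := congr_fun hst k
    by_cases hs : s = 0
    · have hv (k : κ) : v k = 0 := by simpa [hs, hne hs] using hrel k
      simp [hv]
    · apply mul_left_cancel₀ hs
      linear_combination v j * hrel i - v i * hrel j
  · by_cases hv : v = 0
    · exact ⟨0, 1, by simp [hv], by simp⟩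
    · obtain ⟨j, hj⟩ := Function.ne_iff.mp hv
      refine ⟨v j, -u j, ?_, fun h0 ↦ absurd h0 hj⟩
      funext i
      simp only [Pi.add_apply, Pi.smul_apply, Pi.zero_apply, smul_eq_mul]
      linear_combination h i j

lemma not_linearIndependent_int_of_zmod {p : ℕ} [Fact p.Prime] {κ : Type*} {u v : κ → ℤ}
    (hu : ∀ k, 2 * u k ^ 2 < p) (hv : ∀ k, 2 * v k ^ 2 < p)
    (h : ¬ LinearIndependent (ZMod p) ![algebraMap ℤ (ZMod p) ∘ u, algebraMap ℤ (ZMod p) ∘ v]) :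
    ¬ LinearIndependent ℤ ![u, v] := by
  rw [not_linearIndependent_pair_iff_forall_mul_eq_mul] at h ⊢
  intro i j
  have hdvd : (p : ℤ) ∣ u i * v j - u j * v i := by
    rw [← ZMod.intCast_zmod_eq_zero_iff_dvd]
    simpa [sub_eq_zero] using h i j
  have hlt : |u i * v j - u j * v i| < p := by
    have huv (k l : κ) : 2 * |u k * v l| ≤ u k ^ 2 + v l ^ 2 := by
      simpa [abs_mul, mul_assoc] using two_mul_le_add_sq |u k| |v l|
    linarith [abs_sub (u i * v j) (u j * v i), huv i j, huv j i, hu i, hu j, hv i, hv j]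
  exact sub_eq_zero.mp (Int.eq_zero_of_abs_lt_dvd hdvd hlt)

lemma linearIndependent_zmod_iff_forall_dvd {p : ℕ} {M ι : Type*} [AddCommGroup M]
    [Module (ZMod p) M] [Fintype ι] {ω : ι → M} :
    LinearIndependent (ZMod p) ω ↔
      ∀ c : ι → ℤ, ∑ i, c i • ω i = 0 → ∀ i, (p : ℤ) ∣ c i := by
  rw [Fintype.linearIndependent_iff, ZMod.intCast_surjective.comp_left.forall]
  simp only [Function.comp_apply, Int.cast_smul_eq_zsmul, ZMod.intCast_zmod_eq_zero_iff_dvd]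

lemma aeval_ne_zero_of_natDegree_lt_finrank {K F : Type*} [Field K] [Field F] [Algebra K F]
    (hprime : (finrank K F).Prime) {z : F} (hz : z ∉ (algebraMap K F).range) {P : K[X]}
    (hP : P ≠ 0) (hdeg : P.natDegree < finrank K F) : aeval z P ≠ 0 := by
  intro hPz
  have := Module.finite_of_finrank_pos hprime.pos
  have hle : (minpoly K z).natDegree ≤ P.natDegree :=
    natDegree_le_of_dvd (minpoly.dvd K z hPz) hP
  rcases (Nat.dvd_prime hprime).mp (minpoly.degree_dvd (.of_finite K z)) with hone | hfull
  · exact hz (minpoly.natDegree_eq_one_iff.mp hone)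
  · omega

lemma aeval_ne_zero_of_natDegree_lt_of_card_eq_prime_pow {p q : ℕ} [Fact p.Prime] (hq : q.Prime)
    {F : Type*} [Field F] [Fintype F] [Algebra (ZMod p) F] (hcard : Fintype.card F = p ^ q) {z : F}
    (hz : ¬ ∃ t : ℤ, z = t) {P : (ZMod p)[X]} (hP : P ≠ 0) (hdeg : P.natDegree < q) :
    aeval z P ≠ 0 := by
  have hfinrank : finrank (ZMod p) F = q := by
    have hpow := Module.card_eq_pow_finrank (K := ZMod p) (V := F)
    rw [hcard, ZMod.card] at hpow
    exact (Nat.pow_right_injective (Fact.out : p.Prime).two_le hpow).symm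
  have hz' : z ∉ (algebraMap (ZMod p) F).range := by
    rintro ⟨t, rfl⟩
    obtain ⟨n, rfl⟩ := ZMod.intCast_surjective t
    exact hz ⟨n, map_intCast _ n⟩
  exact aeval_ne_zero_of_natDegree_lt_finrank (hfinrank ▸ hq) hz' hP (hfinrank ▸ hdeg)

theorem stmt_12_general {p : ℕ} [Fact p.Prime] {A : Type*} [Ring A] [IsDomain A]
    [Algebra (ZMod p) A] {ω : Fin 3 → A} (hω : LinearIndependent (ZMod p) ω) {z : A}
    (hz : ∀ P : (ZMod p)[X], P.Monic → P.natDegree = 2 → aeval z P ≠ 0)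
    {r : Fin 3 → ℝ} (hr₀ : r 0 ≤ 1) (hr : ∀ i, r i ≤ √(p / 2)) {u v : Fin 3 ⊕ Fin 3 → ℤ}
    (hu : u ∈ mulGraph ℤ ω z) (hv : v ∈ mulGraph ℤ ω z)
    (hur : ∀ k, |(u k : ℝ)| < Sum.elim r r k) (hvr : ∀ k, |(v k : ℝ)| < Sum.elim r r k) :
    ¬ LinearIndependent ℤ ![u, v] := by
  have eq_zero {n : ℤ} (hn : |(n : ℝ)| < r 0) : n = 0 :=
    Int.abs_lt_one_iff.mp (by exact_mod_cast hn.trans_le hr₀)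
  have two_mul_sq_lt {w : Fin 3 ⊕ Fin 3 → ℤ} (hw : ∀ k, |(w k : ℝ)| < Sum.elim r r k) (k) :
      2 * w k ^ 2 < p := by
    have hwk := (hw k).trans_le (Sum.rec hr hr k : Sum.elim r r k ≤ √(p / 2))
    have hsq : (w k : ℝ) ^ 2 < p / 2 := Real.sq_lt.mpr (abs_lt.mp hwk)
    exact_mod_cast (by linarith : 2 * (w k : ℝ) ^ 2 < p)
  refine not_linearIndependent_int_of_zmod (two_mul_sq_lt hur) (two_mul_sq_lt hvr) ?_
  refine not_linearIndependent_of_mem_mulGraph hω (i₀ := 0) (by simp) (by simpa using hz)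
    ?_ ?_ ?_
  · simpa [Fin.forall_fin_two] using
      ⟨algebraMap_comp_mem_mulGraph hu, algebraMap_comp_mem_mulGraph hv⟩
  · simp [Fin.forall_fin_two, eq_zero (hur (.inl 0)), eq_zero (hvr (.inl 0))]
  · simp [Fin.forall_fin_two, eq_zero (hur (.inr 0)), eq_zero (hvr (.inr 0))]

/-- Lower bound for the second successive minimum: for `z ∉ F_p`, any two lattice
points of `Γ_z` in the box scaled by `H₁⁻¹` are linearly dependent over `ℚ`. -/
theorem stmt_12 (p : ℕ) (hp : p.Prime)
    (F : Type) [instField : Field F] [instFintype : Fintype F]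
    (hcard : Fintype.card F = p ^ 3)
    (ω : Fin 3 → F)
    (hli : ∀ c : Fin 3 → ℤ, (∑ i, (c i : F) * ω i) = 0 → ∀ i, (p : ℤ) ∣ c i)
    (hspan : ∀ x : F, ∃ c : Fin 3 → ℤ, x = ∑ i, (c i : F) * ω i)
    (H : Fin 3 → ℕ)
    (hH1 : ∀ i, 1 ≤ H i)
    (hH01 : H 0 ≤ H 1) (hH12 : H 1 ≤ H 2)
    (hHlt : (H 2 : ℝ) < Real.sqrt ((p : ℝ) / 2))
    (z : F) (hz : ¬ ∃ t : ℤ, z = (t : F))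
    (ux uy vx vy : Fin 3 → ℤ)
    (humem : z * (∑ i, (ux i : F) * ω i) = ∑ i, (uy i : F) * ω i)
    (hvmem : z * (∑ i, (vx i : F) * ω i) = ∑ i, (vy i : F) * ω i)
    (hux : ∀ i, |(ux i : ℝ)| < (H i : ℝ) / (H 0 : ℝ))
    (huy : ∀ i, |(uy i : ℝ)| < (H i : ℝ) / (H 0 : ℝ))
    (hvx : ∀ i, |(vx i : ℝ)| < (H i : ℝ) / (H 0 : ℝ))
    (hvy : ∀ i, |(vy i : ℝ)| < (H i : ℝ) / (H 0 : ℝ)) :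
    ∃ a b : ℤ, ¬ (a = 0 ∧ b = 0) ∧
      (∀ i, a * ux i + b * vx i = 0) ∧ (∀ i, a * uy i + b * vy i = 0) := by
  have : Fact p.Prime := ⟨hp⟩
  have : CharP F p := charP_of_card_eq_prime_pow hcard
  let := ZMod.algebra F p
  have hω : LinearIndependent (ZMod p) ω :=
    linearIndependent_zmod_iff_forall_dvd.mpr (by simpa only [zsmul_eq_mul] using hli)
  have hle : ∀ i, (H i : ℝ) ≤ H 2 := by
    simp [Fin.forall_fin_succ, hH01.trans hH12, hH12]
  have hH0 : 1 ≤ (H 0 : ℝ) := by exact_mod_cast hH1 0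
  have hdep := stmt_12_general (r := fun i ↦ H i / H 0) hω
    (fun P hP hdeg ↦ aeval_ne_zero_of_natDegree_lt_of_card_eq_prime_pow Nat.prime_three hcard hz
      hP.ne_zero (by omega))
    (div_self_le_one _) (fun i ↦ (div_le_self (by positivity) hH0).trans ((hle i).trans hHlt.le))
    (u := Sum.elim ux uy) (v := Sum.elim vx vy) (by simpa [mem_mulGraph] using humem)
    (by simpa [mem_mulGraph] using hvmem) (Sum.rec hux huy) (Sum.rec hvx hvy)
  obtain ⟨a, b, hab, hne⟩ :
      ∃ a b : ℤ, a • Sum.elim ux uy + b • Sum.elim vx vy = 0 ∧ ¬ (a = 0 ∧ b = 0) := by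
    simpa only [LinearIndependent.pair_iff, not_forall, exists_prop] using hdep
  exact ⟨a, b, hne, fun i ↦ congr_fun hab (.inl i), fun i ↦ congr_fun hab (.inr i)⟩
end

section
/- Let p be a prime and {ω₁, ω₂, ω₃} a basis of F_{p³} over F_p. Let z', z'' ∈ F_{p³} and suppose u = (x₁, x₂, x₃, y₁, y₂, y₃) ∈ ℤ⁶ is a nonzero vector with |xᵢ| < p and |yᵢ| < p for all i, such that u ∈ Γ_{z'} ∩ Γ_{z''}. Then z' = z''. (In particular, a nonzero lattice vector of Γ_z lying in the box with all coordinates of absolute value less than p determines z uniquely.) -/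
open scoped Classical

/-!
If `z' v = w = z'' v` with `v ≠ 0`, then `z' = z''`. Here `v` and `w` are the combinations of the
basis with coefficients `xᵢ` and `yᵢ`. Were `v = 0`, then also `w = z' v = 0`, so by linear
independence modulo `p` all the `xᵢ` and `yᵢ` would be multiples of `p` of absolute value less
than `p`, that is, zero.
-/

section SumZSMul

variable {R M ι : Type*} [AddCommGroup M] [Fintype ι] {m : ℤ} {ω : ι → M} {x y : ι → ℤ}

theorem eq_zero_of_sum_zsmul_eq_zero_of_abs_lt
    (hω : ∀ c : ι → ℤ, ∑ i, c i • ω i = 0 → ∀ i, m ∣ c i)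
    (hx : ∀ i, |x i| < m) (hsum : ∑ i, x i • ω i = 0) : x = 0 :=
  funext fun i => Int.eq_zero_of_abs_lt_dvd (hω x hsum i) (hx i)

theorem sum_zsmul_ne_zero_of_smul_sum_zsmul_eq [SMulZeroClass R M] {z : R}
    (hω : ∀ c : ι → ℤ, ∑ i, c i • ω i = 0 → ∀ i, m ∣ c i)
    (hne : ¬ (x = 0 ∧ y = 0)) (hx : ∀ i, |x i| < m) (hy : ∀ i, |y i| < m)
    (hmem : z • ∑ i, x i • ω i = ∑ i, y i • ω i) : ∑ i, x i • ω i ≠ 0 := by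
  intro hx_sum
  have hy_sum : ∑ i, y i • ω i = 0 := by rw [← hmem, hx_sum, smul_zero]
  exact hne ⟨eq_zero_of_sum_zsmul_eq_zero_of_abs_lt hω hx hx_sum,
    eq_zero_of_sum_zsmul_eq_zero_of_abs_lt hω hy hy_sum⟩

theorem stmt_13_general [Ring R] [IsCancelMulZero R] [Module R M]
    [Module.IsTorsionFree R M] {z' z'' : R}
    (hω : ∀ c : ι → ℤ, ∑ i, c i • ω i = 0 → ∀ i, m ∣ c i)
    (hne : ¬ (x = 0 ∧ y = 0)) (hx : ∀ i, |x i| < m) (hy : ∀ i, |y i| < m)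
    (hmem' : z' • ∑ i, x i • ω i = ∑ i, y i • ω i)
    (hmem'' : z'' • ∑ i, x i • ω i = ∑ i, y i • ω i) : z' = z'' :=
  smul_left_injective R (sum_zsmul_ne_zero_of_smul_sum_zsmul_eq hω hne hx hy hmem')
    (hmem'.trans hmem''.symm)

end SumZSMul

/-- A nonzero lattice vector with all coordinates of absolute value less than `p`
belongs to `Γ_z` for at most one `z`. -/
theorem stmt_13 (p : ℕ) (hp : p.Prime)
    (F : Type) [instField : Field F] [instFintype : Fintype F]
    (hcard : Fintype.card F = p ^ 3)
    (ω : Fin 3 → F)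
    (hli : ∀ c : Fin 3 → ℤ, (∑ i, (c i : F) * ω i) = 0 → ∀ i, (p : ℤ) ∣ c i)
    (hspan : ∀ x : F, ∃ c : Fin 3 → ℤ, x = ∑ i, (c i : F) * ω i)
    (z' z'' : F)
    (x y : Fin 3 → ℤ)
    (hne : ¬ ((∀ i, x i = 0) ∧ (∀ i, y i = 0)))
    (hx : ∀ i, |x i| < (p : ℤ)) (hy : ∀ i, |y i| < (p : ℤ))
    (hmem' : z' * (∑ i, (x i : F) * ω i) = ∑ i, (y i : F) * ω i)
    (hmem'' : z'' * (∑ i, (x i : F) * ω i) = ∑ i, (y i : F) * ω i) :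
    z' = z'' := by
  simp only [← zsmul_eq_mul] at hli hmem' hmem''
  exact stmt_13_general hli (by simpa only [funext_iff, Pi.zero_apply] using hne) hx hy hmem' hmem''
end

section
/- Let p be a prime and {ω₁, ω₂, ω₃} a basis of F_{p³} over F_p. Let z', z'' ∈ F_{p³} with z' ≠ z''. Suppose u₁, u₂, u₃, v₁, v₂, v₃ are integers with |uᵢ| < p and |vᵢ| < p for all i, such that for every (x₁, x₂, x₃, y₁, y₂, y₃) ∈ Γ_{z'} and also for every (x₁, x₂, x₃, y₁, y₂, y₃) ∈ Γ_{z''}, the integer x₁u₁ + x₂u₂ + x₃u₃ + y₁v₁ + y₂v₂ + y₃v₃ is divisible by p. Then u₁ = u₂ = u₃ = v₁ = v₂ = v₃ = 0. (That is, distinct elements z have no common nonzero small vector in the polar lattices Γ_z*.) -/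
open scoped Classical

/-!
Multiplication by `z'` and multiplication by `z''` differ by a surjective map, so their graphs
together generate the whole product. Pulling back along the coordinate map, `Γ_{z'} + Γ_{z''}` is
all of `ℤ³ × ℤ³`, and a form that is divisible by `p` on both lattices is divisible by `p` on the
standard basis vectors.
-/

section Graph

variable {R M N : Type*} [Ring R] [AddCommGroup M] [Module R M] [AddCommGroup N] [Module R N]

theorem graph_sup_graph_eq_top {f g : M →ₗ[R] N} (hfg : Function.Surjective (f - g)) :
    f.graph ⊔ g.graph = ⊤ := by
  refine eq_top_iff.mpr fun ⟨m, n⟩ _ => ?_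
  obtain ⟨t, ht⟩ := hfg (n - g m)
  refine Submodule.mem_sup.mpr ⟨(t, f t), rfl, (m - t, g (m - t)), rfl, ?_⟩
  have hn : f t + g (m - t) = n := by
    rw [map_sub, add_sub_left_comm, ← LinearMap.sub_apply, ht, add_sub_cancel]
  rw [Prod.mk_add_mk, add_sub_cancel, hn]

theorem comap_sup_comap_of_surjective {φ : M →ₗ[R] N} (hφ : Function.Surjective φ)
    (S T : Submodule R N) : S.comap φ ⊔ T.comap φ = (S ⊔ T).comap φ := by
  rw [← Submodule.map_sup_comap_of_surjective hφ S T,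
    Submodule.comap_map_eq_self ((LinearMap.ker_le_comap φ).trans le_sup_left)]

end Graph

section Coordinates

variable {R A ι : Type*} [CommRing R] [Ring A] [Algebra R A] [Fintype ι]

variable (R) in
/-- The lattice `Γ_z` of coordinate vectors `(x, y)` with `z * ∑ i, x i • ω i = ∑ i, y i • ω i`,
encoded as the preimage of the graph of multiplication by `z` under the coordinate map of `ω`. -/
def mulGraphLattice (ω : ι → A) (z : A) : Submodule R ((ι → R) × (ι → R)) :=
  (LinearMap.mulLeft R z).graph.comap
    ((Fintype.linearCombination R ω).prodMap (Fintype.linearCombination R ω))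

theorem mem_mulGraphLattice {ω : ι → A} {z : A} {w : (ι → R) × (ι → R)} :
    w ∈ mulGraphLattice R ω z ↔ z * ∑ i, w.1 i • ω i = ∑ i, w.2 i • ω i :=
  eq_comm

theorem mulGraphLattice_sup_eq_top {ω : ι → A}
    (hω : Function.Surjective (Fintype.linearCombination R ω)) {z' z'' : A}
    (hz : IsUnit (z' - z'')) : mulGraphLattice R ω z' ⊔ mulGraphLattice R ω z'' = ⊤ := by
  have hsub : Function.Surjective (LinearMap.mulLeft R z' - LinearMap.mulLeft R z'') := fun a => by
    obtain ⟨b, hb⟩ := (IsUnit.isUnit_iff_mulLeft_bijective.mp hz).surjective a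
    exact ⟨b, by rw [← hb]; exact (sub_mul z' z'' b).symm⟩
  rw [mulGraphLattice, mulGraphLattice, comap_sup_comap_of_surjective (hω.prodMap hω),
    graph_sup_graph_eq_top hsub, Submodule.comap_top]

theorem coeff_mem_of_pairing_mem_on_mulGraphLattices {ω : ι → A}
    (hω : Function.Surjective (Fintype.linearCombination R ω)) {z' z'' : A}
    (hz : IsUnit (z' - z'')) (I : Ideal R) {u v : ι → R}
    (h' : ∀ w ∈ mulGraphLattice R ω z', ∑ i, w.1 i * u i + ∑ i, w.2 i * v i ∈ I)
    (h'' : ∀ w ∈ mulGraphLattice R ω z'', ∑ i, w.1 i * u i + ∑ i, w.2 i * v i ∈ I) :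
    (∀ i, u i ∈ I) ∧ ∀ i, v i ∈ I := by
  let pairing : (ι → R) × (ι → R) →ₗ[R] R :=
    (Fintype.linearCombination R u).coprod (Fintype.linearCombination R v)
  have hpairing : ∀ w, pairing w ∈ I := by
    have hle := sup_le (c := Submodule.comap pairing I) h' h''
    rw [mulGraphLattice_sup_eq_top hω hz] at hle
    exact fun w => hle Submodule.mem_top
  exact ⟨fun i => by simpa [pairing] using hpairing (Pi.single i 1, 0),
    fun i => by simpa [pairing] using hpairing (0, Pi.single i 1)⟩

end Coordinates

theorem stmt_14_general {A ι : Type*} [Ring A] [Fintype ι] {p : ℤ} {ω : ι → A}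
    (hspan : ∀ a : A, ∃ c : ι → ℤ, a = ∑ i, (c i : A) * ω i)
    {z' z'' : A} (hz : IsUnit (z' - z''))
    {u v : ι → ℤ} (hu : ∀ i, |u i| < p) (hv : ∀ i, |v i| < p)
    (hpolar' : ∀ x y : ι → ℤ, z' * (∑ i, (x i : A) * ω i) = ∑ i, (y i : A) * ω i →
      p ∣ ∑ i, x i * u i + ∑ i, y i * v i)
    (hpolar'' : ∀ x y : ι → ℤ, z'' * (∑ i, (x i : A) * ω i) = ∑ i, (y i : A) * ω i →
      p ∣ ∑ i, x i * u i + ∑ i, y i * v i) :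
    (∀ i, u i = 0) ∧ ∀ i, v i = 0 := by
  simp only [← zsmul_eq_mul] at hspan hpolar' hpolar''
  have hω : Function.Surjective (Fintype.linearCombination ℤ ω) := fun a =>
    (hspan a).imp fun _ => Eq.symm
  obtain ⟨hpu, hpv⟩ := coeff_mem_of_pairing_mem_on_mulGraphLattices hω hz
    (Ideal.span {p})
    (fun w hw => Ideal.mem_span_singleton.mpr (hpolar' w.1 w.2 (mem_mulGraphLattice.mp hw)))
    (fun w hw => Ideal.mem_span_singleton.mpr (hpolar'' w.1 w.2 (mem_mulGraphLattice.mp hw)))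
  exact ⟨fun i => Int.eq_zero_of_abs_lt_dvd (Ideal.mem_span_singleton.mp (hpu i)) (hu i),
    fun i => Int.eq_zero_of_abs_lt_dvd (Ideal.mem_span_singleton.mp (hpv i)) (hv i)⟩

/-- Distinct elements `z' ≠ z''` admit no common nonzero small vector in the polar
lattices `Γ_{z'}*` and `Γ_{z''}*`. -/
theorem stmt_14 (p : ℕ) (hp : p.Prime)
    (F : Type) [instField : Field F] [instFintype : Fintype F]
    (hcard : Fintype.card F = p ^ 3)
    (ω : Fin 3 → F)
    (hli : ∀ c : Fin 3 → ℤ, (∑ i, (c i : F) * ω i) = 0 → ∀ i, (p : ℤ) ∣ c i)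
    (hspan : ∀ x : F, ∃ c : Fin 3 → ℤ, x = ∑ i, (c i : F) * ω i)
    (z' z'' : F) (hzz : z' ≠ z'')
    (u v : Fin 3 → ℤ)
    (hu : ∀ i, |u i| < (p : ℤ)) (hv : ∀ i, |v i| < (p : ℤ))
    (hpolar' : ∀ x y : Fin 3 → ℤ,
      z' * (∑ i, (x i : F) * ω i) = ∑ i, (y i : F) * ω i →
      (p : ℤ) ∣ (∑ i, x i * u i + ∑ i, y i * v i))
    (hpolar'' : ∀ x y : Fin 3 → ℤ,
      z'' * (∑ i, (x i : F) * ω i) = ∑ i, (y i : F) * ω i →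
      (p : ℤ) ∣ (∑ i, x i * u i + ∑ i, y i * v i)) :
    (∀ i, u i = 0) ∧ (∀ i, v i = 0) :=
  stmt_14_general hspan (sub_ne_zero.mpr hzz).isUnit hu hv hpolar' hpolar''
end

section
/- There is an absolute constant C > 0 such that for every prime p ≥ 3 and every integer H with 1 ≤ H ≤ √p the following holds. Let Z_H ⊆ F_p* be the set of ratios {x·y⁻¹ mod p : x, y ∈ ℤ, 1 ≤ |x| ≤ H, 1 ≤ |y| ≤ H}, and for z ∈ F_p let f(z) = #{(x, y) ∈ ℤ² : |x| ≤ H, |y| ≤ H, x·z ≡ y (mod p)}. Then Σ_{z ∈ Z_H} f(z)² ≤ C·H²·log p. -/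
open scoped Classical

/-!
For fixed `z` the pairs `(x, y)` with `x * z = y` in `ZMod p` form a lattice `L` in which every
`2 × 2` determinant is divisible by `p`. Let `v` be a shortest nonzero vector of `L`, of sup norm
`m ≤ H`. The points of `L` in the box of radius `H ≤ √p` lie on at most five lines parallel to `v`.
Points of `L` are at distance at least `m`, so each line carries at most `2 * H / m + 1 ≤ 3 * H / m`
of them; hence `f z ≤ 15 * H / m`.
A nonzero vector shorter than `p` lies in at most one of these lattices, and there are `8 * m`
vectors of sup norm `m`, so `∑ f z ^ 2 ≤ ∑_{m ≤ H} 8 * m * (15 * H / m) ^ 2`, a harmonic sum.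
-/

section

open Finset

/-- The sup norm on `ℤ × ℤ`, with values in `ℕ` so that its spheres are the boxes of
`Int.mem_box`. -/
def supNorm (v : ℤ × ℤ) : ℕ := max v.1.natAbs v.2.natAbs

/-- The determinant of two vectors of `ℤ × ℤ`: it measures which line parallel to `v` contains
`w`. -/
def cross (v w : ℤ × ℤ) : ℤ := v.1 * w.2 - v.2 * w.1

lemma supNorm_le_iff {v : ℤ × ℤ} {H : ℕ} :
    supNorm v ≤ H ↔ v ∈ Icc (-(H : ℤ)) H ×ˢ Icc (-(H : ℤ)) H := by
  simp only [supNorm, mem_product, mem_Icc]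
  omega

lemma supNorm_eq_zero {v : ℤ × ℤ} : supNorm v = 0 ↔ v = 0 := by
  simp [supNorm, Prod.ext_iff]

lemma supNorm_pos {v : ℤ × ℤ} : 0 < supNorm v ↔ v ≠ 0 := by
  rw [pos_iff_ne_zero, ne_eq, supNorm_eq_zero]

lemma abs_cross_le {v w : ℤ × ℤ} {H : ℕ} (hv : supNorm v ≤ H) (hw : supNorm w ≤ H) :
    |cross v w| ≤ 2 * (H * H) := by
  simp only [supNorm, max_le_iff, ← Int.ofNat_le, Int.natCast_natAbs] at hv hw
  calc |cross v w| ≤ |v.1| * |w.2| + |v.2| * |w.1| := by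
        simpa only [cross, abs_mul] using abs_sub (v.1 * w.2) (v.2 * w.1)
    _ ≤ H * H + H * H := by gcongr <;> tauto
    _ = 2 * (H * H) := by ring

lemma natAbs_le_natAbs_of_mul_eq_mul {a b x y : ℤ} (ha : a ≠ 0) (hba : b.natAbs ≤ a.natAbs)
    (h : a * y = b * x) : y.natAbs ≤ x.natAbs := by
  refine le_of_mul_le_mul_left ?_ (Int.natAbs_pos.mpr ha)
  calc a.natAbs * y.natAbs = b.natAbs * x.natAbs := by rw [← Int.natAbs_mul, h, Int.natAbs_mul]
    _ ≤ a.natAbs * x.natAbs := by gcongr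

lemma card_mul_le_of_pairwise_le_natAbs_sub {ι : Type*} {s : Finset ι} {f : ι → ℤ} {H m : ℕ}
    (hf : ∀ i ∈ s, (f i).natAbs ≤ H)
    (hsep : (s : Set ι).Pairwise fun i j ↦ m ≤ (f i - f j).natAbs) :
    #s * m ≤ 2 * H + m := by
  have hdisj : (s : Set ι).PairwiseDisjoint fun i ↦ Ico (f i) (f i + m) := by
    intro i hi j hj hij
    have hm : m ≤ (f i - f j).natAbs := hsep hi hj hij
    refine Finset.disjoint_left.mpr fun x hxi hxj ↦ ?_
    rw [mem_Ico] at hxi hxj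
    omega
  calc #s * m = #(s.biUnion fun i ↦ Ico (f i) (f i + m)) := by simp [card_biUnion hdisj]
    _ ≤ #(Ico (-(H : ℤ)) (H + m)) := by
        refine card_le_card (biUnion_subset.mpr fun i hi ↦ ?_)
        have := hf i hi
        exact Ico_subset_Ico (by omega) (by omega)
    _ = 2 * H + m := by rw [Int.card_Ico]; omega

lemma card_mul_supNorm_le_of_cross_eq {s : Finset (ℤ × ℤ)} {v : ℤ × ℤ} {H : ℕ} {c : ℤ}
    (hv : v ≠ 0) (hs : ∀ q ∈ s, supNorm q ≤ H) (hline : ∀ q ∈ s, cross v q = c)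
    (hsep : (s : Set (ℤ × ℤ)).Pairwise fun q r ↦ supNorm v ≤ supNorm (q - r)) :
    #s * supNorm v ≤ 2 * H + supNorm v := by
  have hparallel : ∀ q ∈ s, ∀ r ∈ s, v.1 * (q - r).2 = v.2 * (q - r).1 := by
    intro q hq r hr
    have := (hline q hq).trans (hline r hr).symm
    simp only [cross, Prod.fst_sub, Prod.snd_sub] at this ⊢
    linarith
  rw [← supNorm_pos] at hv
  rcases le_total v.2.natAbs v.1.natAbs with hle | hle
  · have hv₁ : v.1 ≠ 0 := by unfold supNorm at hv; omega
    refine card_mul_le_of_pairwise_le_natAbs_sub (f := Prod.fst)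
      (fun q hq ↦ (le_max_left _ _).trans (hs q hq)) fun q hq r hr hqr ↦ ?_
    exact (hsep hq hr hqr).trans <| max_le le_rfl <|
      natAbs_le_natAbs_of_mul_eq_mul hv₁ hle (hparallel q hq r hr)
  · have hv₂ : v.2 ≠ 0 := by unfold supNorm at hv; omega
    refine card_mul_le_of_pairwise_le_natAbs_sub (f := Prod.snd)
      (fun q hq ↦ (le_max_right _ _).trans (hs q hq)) fun q hq r hr hqr ↦ ?_
    exact (hsep hq hr hqr).trans <| max_le
      (natAbs_le_natAbs_of_mul_eq_mul hv₂ hle (hparallel q hq r hr).symm) le_rfl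

theorem card_mul_supNorm_le_of_minimal {L : AddSubgroup (ℤ × ℤ)} {n H : ℕ} {v : ℤ × ℤ}
    {s : Finset (ℤ × ℤ)} (hL : ∀ u ∈ L, ∀ w ∈ L, (n : ℤ) ∣ cross u w) (hn : H * H ≤ n)
    (hvL : v ∈ L) (hv : v ≠ 0) (hvH : supNorm v ≤ H)
    (hmin : ∀ w ∈ L, w ≠ 0 → supNorm v ≤ supNorm w)
    (hsL : ∀ q ∈ s, q ∈ L) (hsH : ∀ q ∈ s, supNorm q ≤ H) :
    #s * supNorm v ≤ 15 * H := by
  have hlines : ∀ q ∈ s, cross v q ∈ (Icc (-2 : ℤ) 2).image ((n : ℤ) * ·) := by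
    intro q hq
    obtain ⟨k, hk⟩ := hL v hvL q (hsL q hq)
    have hn₀ : (0 : ℤ) < n := by
      have := (supNorm_pos.mpr hv).trans_le hvH
      exact_mod_cast (Nat.mul_pos this this).trans_le hn
    have hk₂ : (n : ℤ) * |k| ≤ n * 2 :=
      calc (n : ℤ) * |k| = |cross v q| := by rw [hk, abs_mul, Nat.abs_cast]
        _ ≤ 2 * (H * H) := abs_cross_le hvH (hsH q hq)
        _ ≤ n * 2 := by rw [mul_comm]; gcongr; exact_mod_cast hn
    exact mem_image.mpr ⟨k, mem_Icc.mpr (abs_le.mp (le_of_mul_le_mul_left hk₂ hn₀)), hk.symm⟩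
  have hfiber : ∀ c, #{q ∈ s | cross v q = c} * supNorm v ≤ 3 * H := by
    intro c
    have hsep : (({q ∈ s | cross v q = c} : Finset (ℤ × ℤ)) : Set (ℤ × ℤ)).Pairwise
        fun q r ↦ supNorm v ≤ supNorm (q - r) := fun q hq r hr hqr ↦
      hmin _ (L.sub_mem (hsL q (mem_filter.mp hq).1) (hsL r (mem_filter.mp hr).1))
        (sub_ne_zero.mpr hqr)
    have := card_mul_supNorm_le_of_cross_eq hv (fun q hq ↦ hsH q (mem_filter.mp hq).1)
      (fun q hq ↦ (mem_filter.mp hq).2) hsep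
    omega
  calc #s * supNorm v
      = ∑ c ∈ (Icc (-2 : ℤ) 2).image ((n : ℤ) * ·), #{q ∈ s | cross v q = c} * supNorm v := by
        rw [card_eq_sum_card_fiberwise hlines, sum_mul]
    _ ≤ #((Icc (-2 : ℤ) 2).image ((n : ℤ) * ·)) * (3 * H) :=
        sum_le_card_nsmul _ _ _ fun c _ ↦ hfiber c
    _ ≤ 5 * (3 * H) := by gcongr; exact card_image_le
    _ = 15 * H := by ring

/-- The lattice of integer solutions `(x, y)` of the congruence `x * z ≡ y (mod n)`. -/
def congruenceLattice {n : ℕ} (z : ZMod n) : AddSubgroup (ℤ × ℤ) where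
  carrier := {q | (q.1 : ZMod n) * z = q.2}
  zero_mem' := by simp
  add_mem' {q r} hq hr := by
    simp only [Set.mem_ofPred_eq, Prod.fst_add, Prod.snd_add, Int.cast_add] at hq hr ⊢
    rw [add_mul, hq, hr]
  neg_mem' {q} hq := by
    simp only [Set.mem_ofPred_eq, Prod.fst_neg, Prod.snd_neg, Int.cast_neg] at hq ⊢
    rw [neg_mul, hq]

/-- The points of `congruenceLattice z` of sup norm at most `H`; their number is the `f z` of the
energy estimate. -/
noncomputable def boxSolutions {n : ℕ} (H : ℕ) (z : ZMod n) : Finset (ℤ × ℤ) :=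
  (Icc (-(H : ℤ)) H ×ˢ Icc (-(H : ℤ)) H).filter fun q ↦ (q.1 : ZMod n) * z = q.2

section

variable {n : ℕ} {z : ZMod n} {v w : ℤ × ℤ} {H : ℕ}

lemma mem_congruenceLattice : v ∈ congruenceLattice z ↔ (v.1 : ZMod n) * z = v.2 := Iff.rfl

lemma mem_boxSolutions : v ∈ boxSolutions H z ↔ supNorm v ≤ H ∧ v ∈ congruenceLattice z := by
  rw [boxSolutions, mem_filter, supNorm_le_iff, mem_congruenceLattice]

lemma dvd_cross_of_mem_congruenceLattice (hv : v ∈ congruenceLattice z)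
    (hw : w ∈ congruenceLattice z) : (n : ℤ) ∣ cross v w := by
  rw [mem_congruenceLattice] at hv hw
  rw [← ZMod.intCast_zmod_eq_zero_iff_dvd, cross]
  push_cast
  rw [← hv, ← hw]
  ring

lemma exists_card_boxSolutions_mul_supNorm_le (hn : H * H ≤ n)
    (hz : ∃ w ∈ boxSolutions H z, w ≠ 0) :
    ∃ v ∈ boxSolutions H z, v ≠ 0 ∧ #(boxSolutions H z) * supNorm v ≤ 15 * H := by
  obtain ⟨w, hw, hw₀⟩ := hz
  obtain ⟨hwH, hwL⟩ := mem_boxSolutions.mp hw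
  obtain ⟨v, hvL, hv, hmin⟩ : ∃ v ∈ congruenceLattice z, v ≠ 0 ∧
      ∀ u ∈ congruenceLattice z, u ≠ 0 → supNorm v ≤ supNorm u := by
    obtain ⟨v, ⟨hvL, hv⟩, hmin⟩ := exists_minimalFor_of_wellFoundedLT
      (fun u ↦ u ∈ congruenceLattice z ∧ u ≠ 0) supNorm ⟨w, hwL, hw₀⟩
    exact ⟨v, hvL, hv, fun u huL hu ↦ (le_total _ _).elim id (hmin ⟨huL, hu⟩)⟩
  have hvH : supNorm v ≤ H := (hmin w hwL hw₀).trans hwH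
  exact ⟨v, mem_boxSolutions.mpr ⟨hvH, hvL⟩, hv, card_mul_supNorm_le_of_minimal
    (fun _ hu _ hu' ↦ dvd_cross_of_mem_congruenceLattice hu hu') hn hvL hv hvH hmin
    (fun q hq ↦ (mem_boxSolutions.mp hq).2) (fun q hq ↦ (mem_boxSolutions.mp hq).1)⟩

lemma sq_card_boxSolutions_le (hn : H * H ≤ n) (hz : ∃ w ∈ boxSolutions H z, w ≠ 0) :
    (#(boxSolutions H z) : ℝ) ^ 2 ≤
      ∑ m ∈ Icc 1 H, (15 * H / m : ℝ) ^ 2 * #{v ∈ box m | v ∈ congruenceLattice z} := by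
  obtain ⟨v, hvH, hv, hcard⟩ := exists_card_boxSolutions_mul_supNorm_le hn hz
  have hv_pos : 0 < supNorm v := supNorm_pos.mpr hv
  have hv_box : v ∈ ({w ∈ box (supNorm v) | w ∈ congruenceLattice z} : Finset (ℤ × ℤ)) :=
    mem_filter.mpr ⟨Int.mem_box.mpr rfl, (mem_boxSolutions.mp hvH).2⟩
  calc (#(boxSolutions H z) : ℝ) ^ 2 ≤ (15 * H / supNorm v : ℝ) ^ 2 * 1 := by
        rw [mul_one]
        gcongr
        rw [le_div_iff₀ (by exact_mod_cast hv_pos)]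
        exact_mod_cast hcard
    _ ≤ (15 * H / supNorm v : ℝ) ^ 2 *
          #{w ∈ box (supNorm v) | w ∈ congruenceLattice z} := by
        gcongr
        exact_mod_cast card_pos.mpr ⟨v, hv_box⟩
    _ ≤ _ := single_le_sum (f := fun m : ℕ ↦
          (15 * H / m : ℝ) ^ 2 * #{v ∈ box m | v ∈ congruenceLattice z})
        (fun _ _ ↦ by positivity) (mem_Icc.mpr ⟨hv_pos, (mem_boxSolutions.mp hvH).1⟩)

end

lemma eq_zero_of_intCast_zmod_eq_zero {n : ℕ} {a : ℤ} (ha : (a : ZMod n) = 0)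
    (han : a.natAbs < n) : a = 0 :=
  Int.eq_zero_of_dvd_of_natAbs_lt_natAbs ((ZMod.intCast_zmod_eq_zero_iff_dvd a n).mp ha) han

section

variable {p : ℕ} [Fact p.Prime]

lemma subsingleton_setOf_mem_congruenceLattice {v : ℤ × ℤ} (hv : v ≠ 0) (hvp : supNorm v < p) :
    {z : ZMod p | v ∈ congruenceLattice z}.Subsingleton := by
  intro z hz w hw
  rw [Set.mem_ofPred_eq, mem_congruenceLattice] at hz hw
  obtain ⟨hv₁p, hv₂p⟩ := max_lt_iff.mp hvp
  have hv₁ : (v.1 : ZMod p) ≠ 0 := by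
    intro h₁
    have h₂ : (v.2 : ZMod p) = 0 := by rw [← hz, h₁, zero_mul]
    exact hv (Prod.ext (eq_zero_of_intCast_zmod_eq_zero h₁ hv₁p)
      (eq_zero_of_intCast_zmod_eq_zero h₂ hv₂p))
  exact mul_left_cancel₀ hv₁ (hz.trans hw.symm)

lemma sum_card_box_filter_mem_congruenceLattice_le (S : Finset (ZMod p)) {m : ℕ} (hm : m ≠ 0)
    (hmp : m < p) : ∑ z ∈ S, #{v ∈ box m | v ∈ congruenceLattice z} ≤ 8 * m :=
  calc ∑ z ∈ S, #{v ∈ box m | v ∈ congruenceLattice z}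
      = ∑ v ∈ box m, #{z ∈ S | v ∈ congruenceLattice z} :=
        sum_card_bipartiteAbove_eq_sum_card_bipartiteBelow fun z v ↦ v ∈ congruenceLattice z
    _ ≤ #(box m : Finset (ℤ × ℤ)) • 1 := by
        refine sum_le_card_nsmul _ _ _ fun v hv ↦ card_le_one.mpr fun z hz w hw ↦ ?_
        have hv₀ : v ≠ 0 := (eq_zero_iff_eq_zero_of_mem_box hv).not.mpr hm
        have hvp : supNorm v < p := (Int.mem_box.mp hv).trans_lt hmp
        exact subsingleton_setOf_mem_congruenceLattice hv₀ hvp (mem_filter.mp hz).2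
          (mem_filter.mp hw).2
    _ = 8 * m := by rw [nsmul_one, Nat.cast_id, Int.card_box hm]

theorem sum_sq_card_boxSolutions_le {H : ℕ} (hHp : H * H ≤ p) {S : Finset (ZMod p)}
    (hS : ∀ z ∈ S, ∃ w ∈ boxSolutions H z, w ≠ 0) :
    ∑ z ∈ S, (#(boxSolutions H z) : ℝ) ^ 2 ≤ 1800 * H ^ 2 * (1 + Real.log H) := by
  have hlt : H < p := by
    have := (Fact.out : p.Prime).two_le
    nlinarith
  calc ∑ z ∈ S, (#(boxSolutions H z) : ℝ) ^ 2
      ≤ ∑ z ∈ S, ∑ m ∈ Icc 1 H,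
          (15 * H / m : ℝ) ^ 2 * #{v ∈ box m | v ∈ congruenceLattice z} :=
        sum_le_sum fun z hz ↦ sq_card_boxSolutions_le hHp (hS z hz)
    _ = ∑ m ∈ Icc 1 H, (15 * H / m : ℝ) ^ 2 *
          (∑ z ∈ S, #{v ∈ box m | v ∈ congruenceLattice z} : ℕ) := by
        rw [sum_comm]
        push_cast
        simp_rw [mul_sum]
    _ ≤ ∑ m ∈ Icc 1 H, (15 * H / m : ℝ) ^ 2 * (8 * m : ℕ) := by
        gcongr with m hm
        obtain ⟨hm₁, hmH⟩ := mem_Icc.mp hm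
        exact sum_card_box_filter_mem_congruenceLattice_le S (by omega) (hmH.trans_lt hlt)
    _ = 1800 * H ^ 2 * (harmonic H : ℝ) := by
        rw [harmonic_eq_sum_Icc]
        push_cast
        rw [mul_sum]
        refine sum_congr rfl fun m hm ↦ ?_
        have : (m : ℝ) ≠ 0 := by
          have := (mem_Icc.mp hm).1
          positivity
        field_simp
        ring
    _ ≤ 1800 * H ^ 2 * (1 + Real.log H) := by
        gcongr
        exact harmonic_le_one_add_log H

end

end

/-- The one-dimensional energy estimate: `Σ_{z ∈ Z_H} f(z)² ≪ H² log p` for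
`1 ≤ H ≤ √p`. -/
theorem stmt_16 :
    ∃ C : ℝ, 0 < C ∧
      ∀ (p : ℕ), p.Prime → 3 ≤ p →
      ∀ (H : ℕ), 1 ≤ H → (H : ℝ) ≤ Real.sqrt p →
        (∑ z ∈ (Finset.image (fun t : ℕ => (t : ZMod p)) (Finset.range p)).filter
            (fun z : ZMod p => ∃ x y : ℤ, 1 ≤ |x| ∧ |x| ≤ (H : ℤ) ∧
              1 ≤ |y| ∧ |y| ≤ (H : ℤ) ∧ (y : ZMod p) * z = (x : ZMod p)),
          ((((Finset.Icc (-(H : ℤ)) (H : ℤ) ×ˢ Finset.Icc (-(H : ℤ)) (H : ℤ)).filter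
              (fun q => (q.1 : ZMod p) * z = (q.2 : ZMod p))).card : ℝ)) ^ 2) ≤
          C * (H : ℝ) ^ 2 * Real.log p := by
  refine ⟨3600, by norm_num, fun p hp hp₃ H hH hHsqrt ↦ ?_⟩
  have : Fact p.Prime := ⟨hp⟩
  have hHp : H * H ≤ p := by
    exact_mod_cast (pow_two (H : ℝ)) ▸ (Real.le_sqrt' (by positivity)).mp hHsqrt
  have hlog_p : 1 ≤ Real.log p := by
    rw [Real.le_log_iff_exp_le (by positivity)]
    exact Real.exp_one_lt_three.le.trans (by exact_mod_cast hp₃)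
  have hlog_H : Real.log H ≤ Real.log p :=
    Real.log_le_log (by positivity) (by exact_mod_cast (Nat.le_mul_self H).trans hHp)
  refine (sum_sq_card_boxSolutions_le hHp fun z hz ↦ ?_).trans ?_
  · obtain ⟨x, y, -, hx, hy₁, hy, hyz⟩ := (Finset.mem_filter.mp hz).2
    refine ⟨(y, x), mem_boxSolutions.mpr ⟨?_, hyz⟩, ?_⟩
    · rw [← Int.natCast_natAbs, Int.ofNat_le] at hx hy
      exact max_le hy hx
    · rintro ⟨⟩
      simp at hy₁
  · calc 1800 * (H : ℝ) ^ 2 * (1 + Real.log H)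
        ≤ 1800 * (H : ℝ) ^ 2 * (2 * Real.log p) := by gcongr; linarith
      _ = 3600 * (H : ℝ) ^ 2 * Real.log p := by ring
end
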